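/- arXiv:2509.12986 — 3 statements merged into one kernel-verified Lean document; each statement's English description precedes it below -/
import Mathlib

section
/- (Deviation bound, diagonal case.) There is an absolute constant C > 0 with the following property: for all integers θ > 0 and θ₀ with 0 < θ₀ ≤ √d, all dimensions d with d > √6·(2θ₀)^{7/4}, every φ ∈ (0,1], every CPTP map Φ on M_d(ℂ) given with a Kraus representation of r operators and satisfying F_e(Φ) ≤ φ², every s ∈ {1,…,d}, and every ε > 0, μ{ U ∈ U(d) : X_{ss}(U) ≥ ε } ≤ C · e^{−θ·ε} · ( exp( r·θ·(φ²·d + 2θ₀)²/(d²·φ²) ) + e^{θ} · ( √r·(φ²·d + 2θ₀)/(φ·d) )^{2θ₀} ). -/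
open MeasureTheory Matrix

noncomputable section

instance matrixMeasurableSpace {m n α : Type*} [MeasurableSpace α] :
    MeasurableSpace (Matrix m n α) :=
  inferInstanceAs (MeasurableSpace (m → n → α))

/-- `X_{st}(U) = ∑_i |⟨e_t, U* K_i U e_s⟩|²`. -/
def Xst {d r : ℕ} (K : Fin r → Matrix (Fin d) (Fin d) ℂ) (s t : Fin d)
    (U : Matrix.unitaryGroup (Fin d) ℂ) : ℝ :=
  ∑ i, ‖(star (U : Matrix (Fin d) (Fin d) ℂ) * K i * (U : Matrix (Fin d) (Fin d) ℂ)) t s‖ ^ 2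

/-! The moments of `X_{ss}(U)` are integrals of products `∏ⱼ ⟨u, Mⱼ u⟩`, where `u = U e_s` is a
Haar-random unit vector. Such a mixed moment is unchanged when all the `Mⱼ` are conjugated by a
common unitary. Differentiating along one-parameter groups gives an identity for commutators with
skew-adjoint matrices, hence, by complex linearity, with matrix units. Summed over all matrix units,
it becomes an integration by parts formula,

  `(d + k) E[⟨u, A u⟩ ∏ⱼ ⟨u, Mⱼ u⟩]`
    `= tr A · E[∏ⱼ ⟨u, Mⱼ u⟩] + ∑ᵢ E[⟨u, A Mᵢ u⟩ ∏_{j ≠ i} ⟨u, Mⱼ u⟩]`.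

For matrices in a multiplicative semigroup whose traces are at most `c` in absolute value, induction
then bounds the moments of order `k` by `∏_{i < k} (c + i) / (d + i)`. Low entanglement fidelity
forces `|tr Kᵢ| ≤ φ d`, so after scaling by `φ` the Kraus operators lie in the semigroup of matrices
of norm at most `φ` and trace at most `c = φ² d`. This controls the moments of `X_{ss} ∈ [0, 1]` up
to order `θ₀`. Truncating the exponential series there, at the cost of a term `e^θ X_{ss}^{θ₀}`,
bounds the moment generating function at `θ`, and Chernoff's inequality gives the tail estimate.
-/

instance matrixBorelSpace {m n α : Type*} [Countable m] [Countable n] [TopologicalSpace α]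
    [SecondCountableTopology α] [MeasurableSpace α] [BorelSpace α] : BorelSpace (Matrix m n α) :=
  inferInstanceAs (BorelSpace (m → n → α))

section OperatorNorm

open scoped Matrix.Norms.L2Operator

variable {n : Type*} [Fintype n] [DecidableEq n]

instance unitaryGroup_compactSpace : CompactSpace (unitaryGroup n ℂ) := by
  have : ProperSpace (Matrix n n ℂ) := FiniteDimensional.proper ℂ _
  refine isCompact_iff_compactSpace.1
    (Metric.isCompact_of_isClosed_isBounded isClosed_unitary ?_)
  refine (Metric.isBounded_closedBall (x := 0) (r := ‖(1 : Matrix n n ℂ)‖)).subset fun U hU => ?_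
  rw [mem_closedBall_zero_iff, ← CStarRing.norm_mem_unitary_mul 1 hU, mul_one]

lemma norm_entry_le_l2_opNorm (A : Matrix n n ℂ) (i j : n) : ‖A i j‖ ≤ ‖A‖ := by
  have h := l2_opNorm_mulVec A (EuclideanSpace.single j 1)
  simp only [PiLp.norm_single, norm_one, mul_one] at h
  simpa using (PiLp.norm_apply_le _ i).trans h

lemma norm_trace_le_card_mul_l2_opNorm (A : Matrix n n ℂ) :
    ‖A.trace‖ ≤ Fintype.card n * ‖A‖ :=
  calc ‖A.trace‖ ≤ ∑ i, ‖A i i‖ := norm_sum_le _ _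
    _ ≤ ∑ _i : n, ‖A‖ := Finset.sum_le_sum fun i _ => norm_entry_le_l2_opNorm A i i
    _ = Fintype.card n * ‖A‖ := by simp

end OperatorNorm

lemma norm_le_one_of_sum_star_mul_self_le_one {A ι : Type*} [CStarAlgebra A] [PartialOrder A]
    [StarOrderedRing A] [Fintype ι] {K : ι → A} (hK : ∑ i, star (K i) * K i ≤ 1) (i : ι) :
    ‖K i‖ ≤ 1 := by
  have hle : star (K i) * K i ≤ 1 :=
    (Finset.single_le_sum (f := fun j => star (K j) * K j) (fun j _ => star_mul_self_nonneg (K j))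
      (Finset.mem_univ i)).trans hK
  have hsq : ‖K i‖ * ‖K i‖ ≤ 1 := by
    rw [← CStarRing.norm_star_mul_self]
    exact (CStarAlgebra.norm_le_one_iff_of_nonneg _ (star_mul_self_nonneg _)).2 hle
  exact (le_abs_self _).trans (abs_le_one_iff_mul_self_le_one.2 hsq)

lemma card_pos_of_dotProduct_eq_one {n R : Type*} [Fintype n] [NonAssocSemiring R] [Nontrivial R]
    {v w : n → R} (h : v ⬝ᵥ w = 1) : 0 < Fintype.card n := by
  refine Fintype.card_pos_iff.2 (not_isEmpty_iff.1 fun _ => ?_)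
  simp at h

section VectorState

variable {n : Type*} [Fintype n] {u : n → ℂ}

/-- The functional `M ↦ ⟨u, M u⟩`. -/
def vectorState (u : n → ℂ) : Matrix n n ℂ →ₗ[ℂ] ℂ where
  toFun M := star u ⬝ᵥ (M *ᵥ u)
  map_add' M N := by simp only [add_mulVec, dotProduct_add]
  map_smul' c M := by simp only [smul_mulVec, dotProduct_smul, RingHom.id_apply]

lemma vectorState_apply (u : n → ℂ) (M : Matrix n n ℂ) :
    vectorState u M = star u ⬝ᵥ (M *ᵥ u) := rfl

lemma vectorState_conjTranspose (u : n → ℂ) (M : Matrix n n ℂ) :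
    vectorState u Mᴴ = star (vectorState u M) := by
  rw [vectorState_apply, star_dotProduct, star_mulVec, conjTranspose_conjTranspose,
    ← dotProduct_mulVec, vectorState_apply]

lemma vectorState_mulVec (g : Matrix n n ℂ) (u : n → ℂ) (M : Matrix n n ℂ) :
    vectorState (g *ᵥ u) M = vectorState u (gᴴ * M * g) := by
  simp only [vectorState_apply, star_mulVec, ← mulVec_mulVec, dotProduct_mulVec, vecMul_vecMul]

lemma vectorState_one [DecidableEq n] (u : n → ℂ) : vectorState u 1 = star u ⬝ᵥ u := by
  rw [vectorState_apply, one_mulVec]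

open scoped ComplexOrder in
lemma sq_norm_vectorState_le (hu : star u ⬝ᵥ u = 1) (M : Matrix n n ℂ) :
    (‖vectorState u M‖ : ℂ) ^ 2 ≤ vectorState u (Mᴴ * M) := by
  classical
  set c := vectorState u M with hc
  have hvar : vectorState u ((M - c • 1)ᴴ * (M - c • 1)) =
      vectorState u (Mᴴ * M) - (‖c‖ : ℂ) ^ 2 := by
    rw [← Complex.conj_mul']
    simp [sub_mul, mul_sub, vectorState_conjTranspose, vectorState_one, hu, ← hc]
  rw [← sub_nonneg, ← hvar]
  exact (posSemidef_conjTranspose_mul_self _).dotProduct_mulVec_nonneg u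

variable [DecidableEq n]

lemma vectorState_single (a : n) (M : Matrix n n ℂ) : vectorState (Pi.single a 1) M = M a a := by
  rw [vectorState_apply, mulVec_single_one, ← Pi.single_star, star_one, single_one_dotProduct,
    col_apply]

lemma vectorState_mul_single (u : n → ℂ) (A : Matrix n n ℂ) (a b : n) :
    vectorState u (A * single a b 1) = (star u ᵥ* A) a * u b := by
  rw [vectorState_apply, ← mulVec_mulVec, single_mulVec_eq, one_mul, mulVec_smul,
    dotProduct_smul, dotProduct_mulVec, dotProduct_single_one, smul_eq_mul, mul_comm]

lemma vectorState_single_mul (u : n → ℂ) (A : Matrix n n ℂ) (a b : n) :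
    vectorState u (single b a 1 * A) = star (u b) * (A *ᵥ u) a := by
  rw [vectorState_apply, ← mulVec_mulVec, single_mulVec_eq, one_mul, dotProduct_smul,
    dotProduct_single_one, smul_eq_mul, mul_comm, Pi.star_apply]

open scoped ComplexOrder MatrixOrder in
lemma sum_sq_norm_vectorState_le_one {ι : Type*} [Fintype ι] {K : ι → Matrix n n ℂ}
    (hu : star u ⬝ᵥ u = 1) (hK : ∑ i, (K i)ᴴ * K i ≤ 1) :
    ∑ i, ‖vectorState u (K i)‖ ^ 2 ≤ 1 := by
  have hpos : 0 ≤ vectorState u (1 - ∑ i, (K i)ᴴ * K i) :=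
    (Matrix.le_iff.1 hK).dotProduct_mulVec_nonneg u
  have hle : ∑ i, (‖vectorState u (K i)‖ : ℂ) ^ 2 ≤ 1 :=
    calc ∑ i, (‖vectorState u (K i)‖ : ℂ) ^ 2 ≤ ∑ i, vectorState u ((K i)ᴴ * K i) :=
          Finset.sum_le_sum fun i _ => sq_norm_vectorState_le hu (K i)
      _ = vectorState u (∑ i, (K i)ᴴ * K i) := (map_sum _ _ _).symm
      _ ≤ vectorState u 1 := by rwa [map_sub, sub_nonneg] at hpos
      _ = 1 := by rw [vectorState_one, hu]
  exact_mod_cast hle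

lemma sum_vectorState_mul_single_mul_lie (hu : star u ⬝ᵥ u = 1) (A B : Matrix n n ℂ) :
    ∑ a, ∑ b, vectorState u (A * single a b 1) * vectorState u ⁅B, single b a 1⁆ =
      vectorState u A * vectorState u B - vectorState u (A * B) := by
  have hA : vectorState u A = ∑ a, (star u ᵥ* A) a * u a := by
    rw [vectorState_apply, dotProduct_mulVec, dotProduct]
  have hB : vectorState u B = ∑ b, (star u ᵥ* B) b * u b := by
    rw [vectorState_apply, dotProduct_mulVec, dotProduct]
  have hAB : vectorState u (A * B) = ∑ a, (star u ᵥ* A) a * (B *ᵥ u) a := by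
    rw [vectorState_apply, ← mulVec_mulVec, dotProduct_mulVec, dotProduct]
  have hu' : vectorState u (A * B) = vectorState u (A * B) * ∑ b, star (u b) * u b := by
    rw [show ∑ b, star (u b) * u b = 1 from hu, mul_one]
  rw [hu', hA, hB, hAB, Finset.sum_mul_sum, Finset.sum_mul_sum, ← Finset.sum_sub_distrib]
  refine Finset.sum_congr rfl fun a _ => ?_
  rw [← Finset.sum_sub_distrib]
  refine Finset.sum_congr rfl fun b _ => ?_
  rw [Ring.lie_def, map_sub, vectorState_mul_single, vectorState_mul_single,
    vectorState_single_mul]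
  ring

end VectorState

lemma sum_lie_mul_single {R n : Type*} [CommRing R] [Fintype n] [DecidableEq n]
    (A : Matrix n n R) :
    ∑ a, ∑ b, ⁅A * single a b 1, single b a (1 : R)⁆ =
      (Fintype.card n : R) • A - A.trace • (1 : Matrix n n R) := by
  have hleft : ∑ a, ∑ b, A * single a b 1 * single b a (1 : R) = (Fintype.card n : R) • A := by
    simp [mul_assoc, ← Finset.mul_sum, sum_single_one, Nat.cast_smul_eq_nsmul]
  have hright : ∑ a, ∑ b, single b a (1 : R) * (A * single a b 1) =
      A.trace • (1 : Matrix n n R) := by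
    simp only [← mul_assoc, single_mul_mul_single, one_mul, mul_one, ← sum_single_one, trace,
      diag_apply, Finset.sum_smul, Finset.smul_sum, smul_single, smul_eq_mul]
    exact Finset.sum_comm
  simp only [Ring.lie_def, Finset.sum_sub_distrib, hleft, hright]

section Derivation

variable {A E ι : Type*} [CStarAlgebra A] [NormedAddCommGroup E] [NormedSpace ℂ E] [Fintype ι]
  [DecidableEq ι] {f : ContinuousMultilinearMap ℂ (fun _ : ι => A) E}

lemma hasDerivAt_conj_exp_smul {N : A} (hN : N ∈ skewAdjoint A) (a : A) :
    HasDerivAt (fun t : ℝ => star (NormedSpace.exp (t • N)) * a * NormedSpace.exp (t • N))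
      ⁅a, N⁆ 0 := by
  have hexp := hasDerivAt_exp_smul_const (𝕂 := ℝ) N 0
  refine ((hexp.star.mul_const a).mul hexp).congr_deriv ?_
  simp only [zero_smul, NormedSpace.exp_zero, one_mul, star_one, mul_one,
    skewAdjoint.mem_iff.1 hN, Ring.lie_def]
  noncomm_ring

lemma linearDeriv_lie_eq_zero_of_mem_skewAdjoint
    (hf : ∀ (g : unitary A) (M : ι → A), f (fun j => star (g : A) * M j * g) = f M) (M : ι → A)
    {N : A} (hN : N ∈ skewAdjoint A) : f.linearDeriv M (fun j => ⁅M j, N⁆) = 0 := by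
  let _ : NormedAlgebra ℚ A := .restrictScalars ℚ ℂ _
  let orbit (t : ℝ) (j : ι) : A :=
    star (NormedSpace.exp (t • N)) * M j * NormedSpace.exp (t • N)
  have horbit : HasDerivAt orbit (fun j => ⁅M j, N⁆) 0 :=
    hasDerivAt_pi.2 fun j => hasDerivAt_conj_exp_smul hN (M j)
  have hzero : M = orbit 0 := by simp [orbit]
  have hconst : f ∘ orbit = fun _ => f M := funext fun t =>
    hf ⟨_, NormedSpace.exp_mem_unitary_of_mem_skewAdjoint (skewAdjoint.smul_mem t hN)⟩ M
  have hderiv := ((f.hasFDerivAt M).restrictScalars ℝ).comp_hasDerivAt_of_eq 0 horbit hzero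
  rw [hconst] at hderiv
  exact hderiv.unique (hasDerivAt_const 0 (f M))

lemma linearDeriv_lie_eq_zero
    (hf : ∀ (g : unitary A) (M : ι → A), f (fun j => star (g : A) * M j * g) = f M) (M : ι → A)
    (N : A) : f.linearDeriv M (fun j => ⁅M j, N⁆) = 0 := by
  have hself {H : A} (hH : H ∈ selfAdjoint A) : f.linearDeriv M (fun j => ⁅M j, H⁆) = 0 := by
    have hskew : Complex.I • H ∈ skewAdjoint A := by
      simp [skewAdjoint.mem_iff, selfAdjoint.mem_iff.1 hH]
    have h := linearDeriv_lie_eq_zero_of_mem_skewAdjoint hf M hskew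
    rw [show (fun j => ⁅M j, Complex.I • H⁆) = Complex.I • fun j => ⁅M j, H⁆ by
      ext j
      simp [Ring.lie_def, smul_sub], map_smul] at h
    exact (smul_eq_zero.1 h).resolve_left Complex.I_ne_zero
  have hsplit : (fun j => ⁅M j, N⁆) = (fun j => ⁅M j, (realPart N : A)⁆) +
      Complex.I • fun j => ⁅M j, (imaginaryPart N : A)⁆ := by
    ext j
    nth_rewrite 1 [← realPart_add_I_smul_imaginaryPart N]
    simp [Ring.lie_def, mul_add, add_mul, smul_sub]
    abel
  rw [hsplit, map_add, map_smul, hself (realPart N).2, hself (imaginaryPart N).2, smul_zero,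
    add_zero]

end Derivation

section MixedMoment

open scoped Matrix.Norms.L2Operator

variable {n : Type*} [Fintype n] [DecidableEq n] (μ : Measure (unitaryGroup n ℂ))
  [IsFiniteMeasure μ] {v : n → ℂ} {k : ℕ}

lemma integrable_prod_vectorState (v : n → ℂ) (M : Fin k → Matrix n n ℂ) :
    Integrable (fun U : unitaryGroup n ℂ => ∏ j, vectorState (U.1 *ᵥ v) (M j)) μ := by
  refine Continuous.integrable_of_hasCompactSupport ?_ (.of_compactSpace _)
  simp only [vectorState_apply]
  fun_prop

/-- The mixed moment `(M₁, …, M_k) ↦ ∫ ∏ⱼ ⟨Uv, Mⱼ Uv⟩ dμ(U)` of the random vector `Uv`. -/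
def mixedMoment (v : n → ℂ) (k : ℕ) :
    ContinuousMultilinearMap ℂ (fun _ : Fin k => Matrix n n ℂ) ℂ where
  toFun M := ∫ U : unitaryGroup n ℂ, ∏ j, vectorState (U.1 *ᵥ v) (M j) ∂μ
  map_update_add' M j x y := by
    rw [← integral_add (integrable_prod_vectorState μ v _) (integrable_prod_vectorState μ v _)]
    congr 1 with U
    exact ((MultilinearMap.mkPiAlgebra ℂ (Fin k) ℂ).compLinearMap
      fun _ => vectorState (U.1 *ᵥ v)).map_update_add M j x y
  map_update_smul' M j c x := by
    rw [← integral_smul]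
    congr 1 with U
    exact ((MultilinearMap.mkPiAlgebra ℂ (Fin k) ℂ).compLinearMap
      fun _ => vectorState (U.1 *ᵥ v)).map_update_smul M j c x
  cont := by
    have : ProperSpace (Matrix n n ℂ) := FiniteDimensional.proper ℂ _
    simp only [vectorState_apply]
    simpa using continuous_parametric_integral_of_continuous (μ := μ)
      (f := fun (M : Fin k → Matrix n n ℂ) (U : unitaryGroup n ℂ) =>
        ∏ j, star (U.1 *ᵥ v) ⬝ᵥ (M j *ᵥ (U.1 *ᵥ v))) (by fun_prop) isCompact_univ

lemma mixedMoment_apply (v : n → ℂ) (M : Fin k → Matrix n n ℂ) :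
    mixedMoment μ v k M = ∫ U : unitaryGroup n ℂ, ∏ j, vectorState (U.1 *ᵥ v) (M j) ∂μ := rfl

lemma mixedMoment_conj [μ.IsMulLeftInvariant] (v : n → ℂ) (g : unitaryGroup n ℂ)
    (M : Fin k → Matrix n n ℂ) :
    mixedMoment μ v k (fun j => star (g : Matrix n n ℂ) * M j * g) = mixedMoment μ v k M := by
  simp only [mixedMoment_apply, star_eq_conjTranspose, ← vectorState_mulVec, mulVec_mulVec]
  exact integral_mul_left_eq_self
    (fun U : unitaryGroup n ℂ => ∏ j, vectorState (U.1 *ᵥ v) (M j)) g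

lemma star_mulVec_dotProduct_mulVec (U : unitaryGroup n ℂ) (v : n → ℂ) :
    star (U.1 *ᵥ v) ⬝ᵥ (U.1 *ᵥ v) = star v ⬝ᵥ v := by
  rw [star_mulVec, dotProduct_mulVec, vecMul_vecMul, ← star_eq_conjTranspose,
    Unitary.star_mul_self_of_mem U.2, vecMul_one]

lemma mixedMoment_cons_one (hv : star v ⬝ᵥ v = 1) (M : Fin k → Matrix n n ℂ) :
    mixedMoment μ v (k + 1) (Fin.cons 1 M) = mixedMoment μ v k M := by
  simp [mixedMoment_apply, Fin.prod_univ_succ, vectorState_one, star_mulVec_dotProduct_mulVec, hv]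

lemma sum_mixedMoment_cons_lie (hv : star v ⬝ᵥ v = 1) (A : Matrix n n ℂ)
    (M : Fin k → Matrix n n ℂ) :
    ∑ a, ∑ b, mixedMoment μ v (k + 1) (Fin.cons ⁅A * single a b 1, single b a 1⁆ M) =
      Fintype.card n * mixedMoment μ v (k + 1) (Fin.cons A M) -
        A.trace * mixedMoment μ v k M := by
  let L := (mixedMoment μ v (k + 1)).toContinuousLinearMap (Fin.cons 0 M) 0
  have hL (X) : mixedMoment μ v (k + 1) (Fin.cons X M) = L X := by
    simp [L, ContinuousMultilinearMap.toContinuousLinearMap]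
  rw [← mixedMoment_cons_one μ hv M]
  simp only [hL, ← map_sum, sum_lie_mul_single, map_sub, map_smul, smul_eq_mul]

lemma prod_comp_update {ι α β : Type*} [Fintype ι] [DecidableEq ι] [CommMonoid β] (f : α → β)
    (M : ι → α) (j : ι) (x : α) :
    ∏ i, f (Function.update M j x i) = f x * ∏ i ∈ Finset.univ.erase j, f (M i) := by
  rw [← Finset.mul_prod_erase _ _ (Finset.mem_univ j), Function.update_self]
  exact congrArg _ (Finset.prod_congr rfl fun i hi => by
    rw [Function.update_of_ne (Finset.ne_of_mem_erase hi)])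

lemma sum_mixedMoment_cons_update_lie (hv : star v ⬝ᵥ v = 1) (A : Matrix n n ℂ)
    (M : Fin k → Matrix n n ℂ) (j : Fin k) :
    ∑ a, ∑ b, mixedMoment μ v (k + 1)
        (Fin.cons (A * single a b 1) (Function.update M j ⁅M j, single b a 1⁆)) =
      mixedMoment μ v (k + 1) (Fin.cons A M) -
        mixedMoment μ v k (Function.update M j (A * M j)) := by
  have hint {k : ℕ} (M : Fin k → Matrix n n ℂ) := integrable_prod_vectorState μ v M
  simp only [mixedMoment_apply]
  rw [← integral_sub (hint _) (hint _)]
  simp only [← integral_finsetSum _ fun _ _ => hint _]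
  rw [← integral_finsetSum _ fun _ _ => integrable_finsetSum _ fun _ _ => hint _]
  congr 1 with U
  have hu : star (U.1 *ᵥ v) ⬝ᵥ (U.1 *ᵥ v) = 1 := (star_mulVec_dotProduct_mulVec U v).trans hv
  set ω := vectorState (U.1 *ᵥ v)
  have hM : ∏ i, ω (M i) = ω (M j) * ∏ i ∈ Finset.univ.erase j, ω (M i) :=
    (Finset.mul_prod_erase _ _ (Finset.mem_univ j)).symm
  simp only [Fin.prod_univ_succ, Fin.cons_zero, Fin.cons_succ, hM,
    prod_comp_update ω, ← mul_assoc, ← Finset.sum_mul, ← sub_mul]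
  rw [sum_vectorState_mul_single_mul_lie hu]

theorem card_add_mul_mixedMoment_cons [μ.IsMulLeftInvariant] (hv : star v ⬝ᵥ v = 1)
    (A : Matrix n n ℂ) (M : Fin k → Matrix n n ℂ) :
    (Fintype.card n + k : ℂ) * mixedMoment μ v (k + 1) (Fin.cons A M) =
      A.trace * mixedMoment μ v k M +
        ∑ j, mixedMoment μ v k (Function.update M j (A * M j)) := by
  have hzero (a b : n) : mixedMoment μ v (k + 1) (Fin.cons ⁅A * single a b 1, single b a 1⁆ M) +
      ∑ j, mixedMoment μ v (k + 1)
        (Fin.cons (A * single a b 1) (Function.update M j ⁅M j, single b a 1⁆)) = 0 := by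
    have h := linearDeriv_lie_eq_zero (mixedMoment_conj μ v) (Fin.cons (A * single a b 1) M)
      (single b a 1)
    simpa only [ContinuousMultilinearMap.linearDeriv_apply, Fin.sum_univ_succ, Fin.cons_zero,
      Fin.cons_succ, Fin.update_cons_zero, ← Fin.cons_update] using h
  have htail : ∑ a, ∑ b, ∑ j, mixedMoment μ v (k + 1)
        (Fin.cons (A * single a b 1) (Function.update M j ⁅M j, single b a 1⁆)) =
      k * mixedMoment μ v (k + 1) (Fin.cons A M) -
        ∑ j, mixedMoment μ v k (Function.update M j (A * M j)) := by
    rw [Finset.sum_comm_cycle]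
    simp only [sum_mixedMoment_cons_update_lie μ hv, Finset.sum_sub_distrib]
    simp
  have hsum : ∑ a, ∑ b, _ = (0 : ℂ) :=
    Finset.sum_eq_zero fun a _ => Finset.sum_eq_zero fun b _ => hzero a b
  simp only [Finset.sum_add_distrib, sum_mixedMoment_cons_lie μ hv, htail] at hsum
  linear_combination hsum

theorem norm_mixedMoment_le_of_mem {μ : Measure (unitaryGroup n ℂ)} [IsProbabilityMeasure μ]
    [μ.IsMulLeftInvariant] (hv : star v ⬝ᵥ v = 1) {S : Subsemigroup (Matrix n n ℂ)} {c : ℝ}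
    (hS : ∀ A ∈ S, ‖A.trace‖ ≤ c) {M : Fin k → Matrix n n ℂ} (hM : ∀ j, M j ∈ S) :
    ‖mixedMoment μ v k M‖ ≤ ∏ i ∈ Finset.range k, (c + i) / (Fintype.card n + i) := by
  induction k with
  | zero => simp [mixedMoment_apply]
  | succ k ih =>
    have hn : 0 < (Fintype.card n : ℝ) := Nat.cast_pos.2 (card_pos_of_dotProduct_eq_one hv)
    set P := ∏ i ∈ Finset.range k, (c + i) / (Fintype.card n + i)
    have htail : ‖mixedMoment μ v k (Fin.tail M)‖ ≤ P := ih fun j => hM j.succ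
    have hmerge (j : Fin k) :
        ‖mixedMoment μ v k (Function.update (Fin.tail M) j (M 0 * Fin.tail M j))‖ ≤ P :=
      ih ((Function.forall_update_iff _ _).2
        ⟨mul_mem (hM 0) (hM j.succ), fun i _ => hM i.succ⟩)
    have hrec := card_add_mul_mixedMoment_cons μ hv (M 0) (Fin.tail M)
    rw [Fin.cons_self_tail] at hrec
    rw [Finset.prod_range_succ, ← mul_div_assoc, le_div_iff₀' (by positivity)]
    calc (Fintype.card n + k : ℝ) * ‖mixedMoment μ v (k + 1) M‖
        = ‖(Fintype.card n + k : ℂ) * mixedMoment μ v (k + 1) M‖ := by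
          rw [norm_mul, ← Nat.cast_add (R := ℂ), Complex.norm_natCast, Nat.cast_add]
      _ ≤ ‖(M 0).trace‖ * ‖mixedMoment μ v k (Fin.tail M)‖ +
          ∑ j, ‖mixedMoment μ v k (Function.update (Fin.tail M) j (M 0 * Fin.tail M j))‖ := by
          rw [hrec, ← norm_mul]
          exact (norm_add_le _ _).trans (by gcongr; exact norm_sum_le _ _)
      _ ≤ c * P + ∑ _j : Fin k, P := by
          have hc : 0 ≤ c := (norm_nonneg _).trans (hS _ (hM 0))
          gcongr with j
          · exact hS _ (hM 0)
          · exact hmerge j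
      _ = P * (c + k) := by
          rw [Finset.sum_const, Finset.card_univ, Fintype.card_fin, nsmul_eq_mul]
          ring

end MixedMoment

section SmallTrace

open scoped Matrix.Norms.L2Operator

variable {n : Type*} [Fintype n] [DecidableEq n] {φ : ℝ}

/-- The matrices `A` with `‖A‖ ≤ φ` and `|tr A| ≤ φ² n`, which contain the Kraus operators after
scaling by `φ`. As `φ ≤ 1`, the product of two matrices of norm at most `φ` satisfies both bounds.
-/
def smallTraceSubsemigroup (n : Type*) [Fintype n] [DecidableEq n] (hφ : 0 ≤ φ) (hφ1 : φ ≤ 1) :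
    Subsemigroup (Matrix n n ℂ) where
  carrier := {A | ‖A‖ ≤ φ ∧ ‖A.trace‖ ≤ φ ^ 2 * Fintype.card n}
  mul_mem' {A B} hA hB := by
    have hAB : ‖A * B‖ ≤ φ ^ 2 :=
      (norm_mul_le A B).trans ((mul_le_mul hA.1 hB.1 (norm_nonneg B) hφ).trans_eq (sq φ).symm)
    refine ⟨hAB.trans (pow_le_of_le_one hφ hφ1 two_ne_zero), ?_⟩
    calc ‖(A * B).trace‖ ≤ Fintype.card n * ‖A * B‖ := norm_trace_le_card_mul_l2_opNorm _
      _ ≤ Fintype.card n * φ ^ 2 := by gcongr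
      _ = φ ^ 2 * Fintype.card n := mul_comm _ _

lemma smul_mem_smallTraceSubsemigroup (hφ : 0 ≤ φ) (hφ1 : φ ≤ 1) {A : Matrix n n ℂ}
    (hA : ‖A‖ ≤ 1) (htr : ‖A.trace‖ ≤ φ * Fintype.card n) :
    (φ : ℂ) • A ∈ smallTraceSubsemigroup n hφ hφ1 := by
  refine ⟨?_, ?_⟩
  · rw [norm_smul, Complex.norm_of_nonneg hφ]
    exact mul_le_of_le_one_right hφ hA
  · rw [trace_smul, norm_smul, Complex.norm_of_nonneg hφ, sq, mul_assoc]
    gcongr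

variable {μ : Measure (unitaryGroup n ℂ)} [IsProbabilityMeasure μ] [μ.IsMulLeftInvariant]
  {v : n → ℂ} {k : ℕ} {M : Fin k → Matrix n n ℂ}

lemma norm_mixedMoment_le (hv : star v ⬝ᵥ v = 1) (hφ : 0 < φ) (hφ1 : φ ≤ 1)
    (hM : ∀ j, ‖M j‖ ≤ 1) (htr : ∀ j, ‖(M j).trace‖ ≤ φ * Fintype.card n) :
    ‖mixedMoment μ v k M‖ ≤ ((φ ^ 2 * Fintype.card n + k) / (φ * Fintype.card n)) ^ k := by
  have hn : 0 < Fintype.card n := card_pos_of_dotProduct_eq_one hv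
  have hscaled := norm_mixedMoment_le_of_mem (μ := μ) (k := k) hv
    (S := smallTraceSubsemigroup n hφ.le hφ1) (fun A hA => hA.2) fun j =>
    smul_mem_smallTraceSubsemigroup hφ.le hφ1 (hM j) (htr j)
  rw [ContinuousMultilinearMap.map_smul_univ, norm_smul, Finset.prod_const, Finset.card_univ,
    Fintype.card_fin, norm_pow, Complex.norm_of_nonneg hφ.le, mul_comm,
    ← le_div_iff₀ (pow_pos hφ k)] at hscaled
  calc ‖mixedMoment μ v k M‖
      ≤ (∏ i ∈ Finset.range k, (φ ^ 2 * Fintype.card n + i) / (Fintype.card n + i)) / φ ^ k :=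
        hscaled
    _ ≤ (∏ _i ∈ Finset.range k, (φ ^ 2 * Fintype.card n + k) / Fintype.card n) / φ ^ k := by
        gcongr with i hi
        · exact (Finset.mem_range.1 hi).le
        · exact le_add_of_nonneg_right i.cast_nonneg
    _ = ((φ ^ 2 * Fintype.card n + k) / (φ * Fintype.card n)) ^ k := by
        rw [Finset.prod_const, Finset.card_range, ← div_pow, div_div, mul_comm φ]

lemma integral_prod_sq_norm_vectorState_le (hv : star v ⬝ᵥ v = 1) (hφ : 0 < φ) (hφ1 : φ ≤ 1)
    (hM : ∀ j, ‖M j‖ ≤ 1) (htr : ∀ j, ‖(M j).trace‖ ≤ φ * Fintype.card n) :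
    ∫ U : unitaryGroup n ℂ, ∏ j, ‖vectorState (U.1 *ᵥ v) (M j)‖ ^ 2 ∂μ ≤
      ((φ ^ 2 * Fintype.card n + 2 * k) / (φ * Fintype.card n)) ^ (2 * k) := by
  have hmoment : mixedMoment μ v (k + k) (Fin.append M fun j => (M j)ᴴ) =
      ((∫ U : unitaryGroup n ℂ, ∏ j, ‖vectorState (U.1 *ᵥ v) (M j)‖ ^ 2 ∂μ : ℝ) : ℂ) := by
    rw [mixedMoment_apply, ← integral_complex_ofReal]
    congr 1 with U
    rw [Fin.prod_univ_add, ← Finset.prod_mul_distrib, Complex.ofReal_prod]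
    refine Finset.prod_congr rfl fun j _ => ?_
    rw [Fin.append_left, Fin.append_right, vectorState_conjTranspose, Complex.star_def,
      Complex.mul_conj', Complex.ofReal_pow]
  have hbound := norm_mixedMoment_le (μ := μ) (M := Fin.append M fun j => (M j)ᴴ) hv hφ hφ1
    (Fin.addCases (fun j => by rw [Fin.append_left]; exact hM j)
      fun j => by rw [Fin.append_right, l2_opNorm_conjTranspose]; exact hM j)
    (Fin.addCases (fun j => by rw [Fin.append_left]; exact htr j)
      fun j => by rw [Fin.append_right, trace_conjTranspose, norm_star]; exact htr j)
  rw [hmoment, Complex.norm_real, ← two_mul, Nat.cast_mul, Nat.cast_two] at hbound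
  exact (le_abs_self _).trans hbound

end SmallTrace

section TruncatedExponential

open scoped Nat

lemma exp_mul_le_sum_add_pow_mul_exp {t x : ℝ} (ht : 0 ≤ t) (hx : 0 ≤ x) (hx1 : x ≤ 1) (m : ℕ) :
    Real.exp (t * x) ≤ ∑ k ∈ Finset.range m, t ^ k / k ! * x ^ k + Real.exp t * x ^ m := by
  have hexp (y : ℝ) : HasSum (fun k : ℕ => y ^ k / k !) (Real.exp y) := by
    simpa [Real.exp_eq_exp_ℝ] using NormedSpace.expSeries_div_hasSum_exp y
  have hhead : HasSum (fun k => if k < m then t ^ k / k ! * x ^ k else 0)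
      (∑ k ∈ Finset.range m, t ^ k / k ! * x ^ k) := by
    rw [← Finset.sum_congr rfl fun k hk => if_pos (Finset.mem_range.1 hk)]
    exact hasSum_sum_of_ne_finset_zero (by simp +contextual)
  refine hasSum_le (fun k => ?_) (hexp (t * x)) (hhead.add ((hexp t).mul_right (x ^ m)))
  rw [mul_pow, mul_div_right_comm]
  split_ifs with hk
  · exact le_add_of_nonneg_right (by positivity)
  · rw [zero_add]
    exact mul_le_mul_of_nonneg_left (pow_le_pow_of_le_one hx hx1 (not_lt.1 hk)) (by positivity)

variable {Ω : Type*} [MeasurableSpace Ω] {μ : Measure Ω} [IsFiniteMeasure μ] {X : Ω → ℝ}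
  {t B : ℝ} {m : ℕ}

theorem mgf_le_of_integral_pow_le (hX : AEMeasurable X μ)
    (h01 : ∀ᵐ ω ∂μ, X ω ∈ Set.Icc 0 1) (hB : 0 ≤ B)
    (hmoment : ∀ k ≤ m, ∫ ω, X ω ^ k ∂μ ≤ B ^ k) (ht : 0 ≤ t) :
    ProbabilityTheory.mgf X μ t ≤ Real.exp (t * B) + Real.exp t * B ^ m := by
  have hpow (k : ℕ) : Integrable (fun ω => X ω ^ k) μ :=
    .of_mem_Icc 0 1 (hX.pow_const k)
      (h01.mono fun ω hω => ⟨pow_nonneg hω.1 k, pow_le_one₀ hω.1 hω.2⟩)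
  have hsum : Integrable (fun ω => ∑ k ∈ Finset.range m, t ^ k / k ! * X ω ^ k) μ :=
    integrable_finsetSum _ fun k _ => (hpow k).const_mul _
  calc ∫ ω, Real.exp (t * X ω) ∂μ
      ≤ ∫ ω, (∑ k ∈ Finset.range m, t ^ k / k ! * X ω ^ k + Real.exp t * X ω ^ m) ∂μ :=
        integral_mono_ae (ProbabilityTheory.integrable_exp_mul_of_mem_Icc hX h01)
          (hsum.add ((hpow m).const_mul _))
          (h01.mono fun ω hω => exp_mul_le_sum_add_pow_mul_exp ht hω.1 hω.2 m)
    _ = ∑ k ∈ Finset.range m, t ^ k / k ! * ∫ ω, X ω ^ k ∂μ + Real.exp t * ∫ ω, X ω ^ m ∂μ := by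
        rw [integral_add hsum ((hpow m).const_mul _),
          integral_finsetSum _ fun k _ => (hpow k).const_mul _]
        simp only [integral_const_mul]
    _ ≤ ∑ k ∈ Finset.range m, t ^ k / k ! * B ^ k + Real.exp t * B ^ m := by
        gcongr with k hk
        · exact hmoment k (Finset.mem_range.1 hk).le
        · exact hmoment m le_rfl
    _ = ∑ k ∈ Finset.range m, (t * B) ^ k / k ! + Real.exp t * B ^ m := by
        simp only [mul_pow, mul_div_right_comm]
    _ ≤ Real.exp (t * B) + Real.exp t * B ^ m := by
        gcongr
        exact Real.sum_le_exp_of_nonneg (mul_nonneg ht hB) m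

theorem measureReal_ge_le_of_integral_pow_le (hX : AEMeasurable X μ)
    (h01 : ∀ᵐ ω ∂μ, X ω ∈ Set.Icc 0 1) (hB : 0 ≤ B)
    (hmoment : ∀ k ≤ m, ∫ ω, X ω ^ k ∂μ ≤ B ^ k) (ht : 0 ≤ t) (ε : ℝ) :
    μ.real {ω | ε ≤ X ω} ≤ Real.exp (-t * ε) * (Real.exp (t * B) + Real.exp t * B ^ m) :=
  (ProbabilityTheory.measure_ge_le_exp_mul_mgf ε ht
    (ProbabilityTheory.integrable_exp_mul_of_mem_Icc hX h01)).trans (by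
      gcongr
      exact mgf_le_of_integral_pow_le hX h01 hB hmoment ht)

end TruncatedExponential

section Kraus

open scoped Matrix.Norms.L2Operator MatrixOrder

lemma norm_le_mul_of_sum_sq_div_le {ι E : Type*} [Fintype ι] [SeminormedAddGroup E] {z : ι → E}
    {c φ : ℝ} (hc : 0 < c) (hφ : 0 ≤ φ) (h : (∑ i, ‖z i‖ ^ 2) / c ^ 2 ≤ φ ^ 2) (i : ι) :
    ‖z i‖ ≤ φ * c := by
  rw [div_le_iff₀ (pow_pos hc 2), ← mul_pow] at h
  exact le_of_sq_le_sq ((Finset.single_le_sum (f := fun i => ‖z i‖ ^ 2)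
    (fun _ _ => sq_nonneg _) (Finset.mem_univ i)).trans h) (mul_nonneg hφ hc.le)

variable {n ι : Type*} [Fintype n] [DecidableEq n] [Fintype ι] {K : ι → Matrix n n ℂ} {v : n → ℂ}
  {φ : ℝ} {k m : ℕ} {μ : Measure (unitaryGroup n ℂ)} [IsProbabilityMeasure μ]
  [μ.IsMulLeftInvariant]

lemma integral_sum_sq_norm_vectorState_pow_le (hv : star v ⬝ᵥ v = 1) (hK : ∀ i, ‖K i‖ ≤ 1)
    (hφ : 0 < φ) (hφ1 : φ ≤ 1) (htr : ∀ i, ‖(K i).trace‖ ≤ φ * Fintype.card n) (hkm : k ≤ m) :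
    ∫ U : unitaryGroup n ℂ, (∑ i, ‖vectorState (U.1 *ᵥ v) (K i)‖ ^ 2) ^ k ∂μ ≤
      (Fintype.card ι * ((φ ^ 2 * Fintype.card n + 2 * m) / (φ * Fintype.card n)) ^ 2) ^ k := by
  have hint (p : Fin k → ι) : Integrable (fun U : unitaryGroup n ℂ =>
      ∏ j, ‖vectorState (U.1 *ᵥ v) (K (p j))‖ ^ 2) μ := by
    refine Continuous.integrable_of_hasCompactSupport ?_ (.of_compactSpace _)
    simp only [vectorState_apply]
    fun_prop
  calc ∫ U : unitaryGroup n ℂ, (∑ i, ‖vectorState (U.1 *ᵥ v) (K i)‖ ^ 2) ^ k ∂μ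
      = ∑ p : Fin k → ι,
          ∫ U : unitaryGroup n ℂ, ∏ j, ‖vectorState (U.1 *ᵥ v) (K (p j))‖ ^ 2 ∂μ := by
        simp only [Fintype.sum_pow, integral_finsetSum _ fun p _ => hint p]
    _ ≤ ∑ _p : Fin k → ι,
          ((φ ^ 2 * Fintype.card n + 2 * m) / (φ * Fintype.card n)) ^ (2 * k) := by
        gcongr with p
        refine (integral_prod_sq_norm_vectorState_le hv hφ hφ1 (fun j => hK (p j))
          fun j => htr (p j)).trans ?_
        gcongr
    _ = _ := by
        rw [Finset.sum_const, Finset.card_univ, Fintype.card_fun, Fintype.card_fin, nsmul_eq_mul,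
          Nat.cast_pow, pow_mul, mul_pow]

theorem measureReal_ge_sum_sq_norm_vectorState_le (hv : star v ⬝ᵥ v = 1)
    (hK : ∑ i, (K i)ᴴ * K i ≤ 1) (hφ : 0 < φ) (hφ1 : φ ≤ 1)
    (htr : ∀ i, ‖(K i).trace‖ ≤ φ * Fintype.card n) {t : ℝ} (ht : 0 ≤ t) (m : ℕ) (ε : ℝ) :
    μ.real {U : unitaryGroup n ℂ | ε ≤ ∑ i, ‖vectorState (U.1 *ᵥ v) (K i)‖ ^ 2} ≤
      Real.exp (-t * ε) *
        (Real.exp (t * (Fintype.card ι *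
            ((φ ^ 2 * Fintype.card n + 2 * m) / (φ * Fintype.card n)) ^ 2)) +
          Real.exp t * (Fintype.card ι *
            ((φ ^ 2 * Fintype.card n + 2 * m) / (φ * Fintype.card n)) ^ 2) ^ m) := by
  have hcont : Continuous fun U : unitaryGroup n ℂ =>
      ∑ i, ‖vectorState (U.1 *ᵥ v) (K i)‖ ^ 2 := by
    simp only [vectorState_apply]
    fun_prop
  refine measureReal_ge_le_of_integral_pow_le hcont.measurable.aemeasurable
    (.of_forall fun U => ⟨by positivity, sum_sq_norm_vectorState_le_one
      ((star_mulVec_dotProduct_mulVec U v).trans hv) hK⟩) (by positivity)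
    (fun k hk => ?_) ht ε
  exact integral_sum_sq_norm_vectorState_pow_le hv
    (norm_le_one_of_sum_star_mul_self_le_one hK) hφ hφ1 htr hk

lemma Xst_self_eq_sum_sq_norm_vectorState {d r : ℕ} (K : Fin r → Matrix (Fin d) (Fin d) ℂ)
    (s : Fin d) (U : unitaryGroup (Fin d) ℂ) :
    Xst K s s U = ∑ i, ‖vectorState (U.1 *ᵥ Pi.single s 1) (K i)‖ ^ 2 := by
  simp only [Xst, vectorState_mulVec, vectorState_single, star_eq_conjTranspose]

theorem deviation_bound_diag_general {d r : ℕ} (μ : Measure (unitaryGroup (Fin d) ℂ))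
    [IsProbabilityMeasure μ] [μ.IsMulLeftInvariant] {K : Fin r → Matrix (Fin d) (Fin d) ℂ}
    (hK : ∑ i, (K i)ᴴ * K i ≤ 1) {φ : ℝ} (hφ : 0 < φ) (hφ1 : φ ≤ 1)
    (htr : ∀ i, ‖(K i).trace‖ ≤ φ * d) (s : Fin d) {θ : ℝ} (hθ : 0 ≤ θ) (θ₀ : ℕ) (ε : ℝ) :
    μ {U | ε ≤ Xst K s s U} ≤
      ENNReal.ofReal (Real.exp (-θ * ε) *
        (Real.exp (r * θ * (φ ^ 2 * d + 2 * θ₀) ^ 2 / (d ^ 2 * φ ^ 2)) +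
          Real.exp θ * (√r * (φ ^ 2 * d + 2 * θ₀) / (φ * d)) ^ (2 * θ₀))) := by
  have hunit : star (Pi.single s 1 : Fin d → ℂ) ⬝ᵥ Pi.single s 1 = 1 := by simp
  have hbase : (√r * (φ ^ 2 * d + 2 * θ₀) / (φ * d)) ^ 2 =
      r * ((φ ^ 2 * d + 2 * θ₀) / (φ * d)) ^ 2 := by
    rw [mul_div_assoc, mul_pow, Real.sq_sqrt r.cast_nonneg]
  have hexponent : r * θ * (φ ^ 2 * d + 2 * θ₀) ^ 2 / (d ^ 2 * φ ^ 2) =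
      θ * (r * ((φ ^ 2 * d + 2 * θ₀) / (φ * d)) ^ 2) := by ring
  simp only [Xst_self_eq_sum_sq_norm_vectorState]
  rw [pow_mul, hbase, hexponent, ← ofReal_measureReal]
  refine ENNReal.ofReal_le_ofReal ?_
  simpa using measureReal_ge_sum_sq_norm_vectorState_le (μ := μ) hunit hK hφ hφ1
    (by simpa using htr) hθ θ₀ ε

end Kraus

/-- Deviation bound, diagonal case. -/
theorem deviation_bound_diag :
    ∃ C : ℝ, 0 < C ∧
      ∀ (θ θ₀ d r : ℕ), 0 < θ → 0 < θ₀ → (θ₀ : ℝ) ≤ Real.sqrt d →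
        Real.sqrt 6 * ((2 * θ₀ : ℕ) : ℝ) ^ ((7 : ℝ) / 4) < (d : ℝ) →
        ∀ φ : ℝ, 0 < φ → φ ≤ 1 →
          ∀ (μ : Measure (Matrix.unitaryGroup (Fin d) ℂ)),
            IsProbabilityMeasure μ → μ.IsMulLeftInvariant →
            ∀ (K : Fin r → Matrix (Fin d) (Fin d) ℂ),
              (∑ i, (K i)ᴴ * K i = 1) →
              ((∑ i, ‖(K i).trace‖ ^ 2) / (d : ℝ) ^ 2 ≤ φ ^ 2) →
              ∀ s : Fin d, ∀ ε : ℝ, 0 < ε →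
                μ {U | ε ≤ Xst K s s U} ≤
                  ENNReal.ofReal (C * Real.exp (-(θ : ℝ) * ε) *
                    (Real.exp ((r : ℝ) * θ * (φ ^ 2 * d + 2 * θ₀) ^ 2 / ((d : ℝ) ^ 2 * φ ^ 2)) +
                      Real.exp θ *
                        (Real.sqrt r * (φ ^ 2 * d + 2 * θ₀) / (φ * d)) ^ (2 * θ₀))) := by
  refine ⟨1, one_pos, fun θ θ₀ d r _ _ _ _ φ hφ hφ1 μ _ _ K hK hF s ε _ => ?_⟩
  open scoped MatrixOrder in
  simpa only [one_mul] using deviation_bound_diag_general μ hK.le hφ hφ1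
    (norm_le_mul_of_sum_sq_div_le (Nat.cast_pos.2 s.pos) hφ.le hF) s θ.cast_nonneg θ₀ ε

end
end

section
/- (Tamper detection against replacement channels.) Let α, γ be real constants with 0 ≤ α < 1 and γ ≥ 2/(1−α). Then there exists k₀ ∈ ℕ such that for every integer k ≥ k₀ for which n := γ·k is an integer, setting d := 2^n, the following holds: for every finite nonempty set S of unit vectors in ℂ^d with |S| ≤ 2^{d^α}, there exists a unitary U ∈ U(d) such that for every ψ ∈ S, ∑_{m'∈{0,1}^k} |⟨e_{m'} ⊗ e_0, U ψ⟩|² ≤ 2^{−k}. Consequently, the Haar-random scheme with this U is a 2^{−k}-tamper detection code against the family of replacement channels { ρ ↦ |ψ⟩⟨ψ| : ψ ∈ S }. -/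
open Matrix

noncomputable section

/-- The index set of `ℂ^d ≅ ℂ^{2^k} ⊗ ℂ^{2^{n-k}}`, `d = 2^n`. -/
abbrev CodeIdx (k m : ℕ) := Fin (2 ^ k) × Fin (2 ^ m)

/-- The first standard basis index of the ancilla register `ℂ^{2^m}`. -/
def anc0 (m : ℕ) : Fin (2 ^ m) := ⟨0, Nat.two_pow_pos m⟩

/-!
Instead of a Haar-random unitary take `F * D` with `F` a Fourier matrix, all of whose entries have
modulus `d ^ (-1/2)`, and `D` a diagonal matrix of independent uniform phases. Only moments up to
order `2 * p` matter, so the phases may be taken among the `(p + 1)`-st roots of unity, which makes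
the probability space finite. By the multinomial theorem and orthogonality of characters, the
`2 * p`-th moment of a coordinate of `F * D * ψ` is at most `p! * d ^ (-p)`, as for a complex
Gaussian. Put `A = d ^ α` and `p = ⌊A⌋`. Since `2 ^ A * p! ≤ A ^ p` (this is where `e > 2` enters,
and `A ≥ 9` suffices), the union bound over `2 ^ A` states yields one unitary for which every state
has weight at most `2 ^ k * A / d ≤ 2 ^ (-k)` on the code space. If `A < 9`, there are at most `512`
states, and their span can be rotated away from the code space altogether.
-/

section

open Finset WithLp
open scoped BigOperators ComplexConjugate Nat

variable {ι κ G 𝕜 : Type*} [RCLike 𝕜]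

theorem expect_norm_sq_sum_mul_addChar [AddCommGroup G] [Fintype G] {s : Finset κ}
    {χ : κ → AddChar G 𝕜} (hχ : Set.InjOn χ s) (c : κ → 𝕜) :
    𝔼 x, ‖∑ k ∈ s, c k * χ k x‖ ^ 2 = ∑ k ∈ s, ‖c k‖ ^ 2 := by
  classical
  have horth : ∀ k ∈ s, ∀ l ∈ s, 𝔼 x, χ k x * conj (χ l x) = if k = l then 1 else 0 := by
    intro k hk l hl
    have h := AddChar.wInner_cWeight_eq_boole (χ l) (χ k)
    simpa only [RCLike.wInner_cWeight_eq_expect, RCLike.inner_apply,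
      hχ.eq_iff hl hk, eq_comm (a := l)] using h
  suffices h : ((𝔼 x, ‖∑ k ∈ s, c k * χ k x‖ ^ 2 : ℝ) : 𝕜) = (∑ k ∈ s, ‖c k‖ ^ 2 : ℝ) from
    RCLike.ofReal_injective h
  calc ((𝔼 x, ‖∑ k ∈ s, c k * χ k x‖ ^ 2 : ℝ) : 𝕜)
      = 𝔼 x, ∑ k ∈ s, ∑ l ∈ s, c k * conj (c l) * (χ k x * conj (χ l x)) := by
        rw [RCLike.ofReal_expect]
        simp only [RCLike.ofReal_pow, ← RCLike.mul_conj, map_sum, map_mul, sum_mul_sum,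
          mul_mul_mul_comm]
    _ = ∑ k ∈ s, ∑ l ∈ s, c k * conj (c l) * if k = l then 1 else 0 := by
        rw [expect_sum_comm]
        refine sum_congr rfl fun k hk => ?_
        rw [expect_sum_comm]
        refine sum_congr rfl fun l hl => ?_
        rw [← mul_expect, horth k hk l hl]
    _ = (∑ k ∈ s, ‖c k‖ ^ 2 : ℝ) := by
        simp +contextual [RCLike.mul_conj]

/-- The character `t ↦ ∏ j, χ (t j) ^ k j` of `ι → G`, that is, the monomial of exponent `k` in the
phases `χ (t j)`. The moments of a linear form in these phases expand into such characters. -/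
def monomialAddChar [AddCommGroup G] [Fintype ι] (χ : AddChar G 𝕜) (k : ι → ℕ) :
    AddChar (ι → G) 𝕜 :=
  ∏ j, χ.compAddMonoidHom (Pi.evalAddMonoidHom (fun _ : ι => G) j) ^ k j

theorem monomialAddChar_apply [AddCommGroup G] [Fintype ι] (χ : AddChar G 𝕜) (k : ι → ℕ)
    (t : ι → G) : monomialAddChar χ k t = ∏ j, χ (t j) ^ k j := by
  simp [monomialAddChar, AddChar.prod_apply]

theorem monomialAddChar_injOn [AddCommGroup G] [Fintype ι] (χ : AddChar G 𝕜) :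
    Set.InjOn (monomialAddChar (ι := ι) χ) {k | ∀ j, k j < orderOf χ} := by
  classical
  intro k hk l hl h
  ext j
  refine pow_injOn_Iio_orderOf (hk j) (hl j) (DFunLike.ext _ _ fun x => ?_)
  have hx := DFunLike.congr_fun h (Pi.single j x)
  have heval (e : ι → ℕ) : ∏ i, χ ((Pi.single j x : ι → G) i) ^ e i = χ x ^ e j := by
    rw [Fintype.prod_eq_single j fun i hi => by simp [hi], Pi.single_eq_same]
  simpa only [monomialAddChar_apply, heval, AddChar.pow_apply] using hx

theorem multinomial_le_factorial_sum (s : Finset ι) (k : ι → ℕ) :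
    Nat.multinomial s k ≤ (∑ j ∈ s, k j)! :=
  Nat.div_le_self _ _

theorem expect_norm_sum_mul_addChar_pow_le [AddCommGroup G] [Fintype G] [Fintype ι] [DecidableEq ι]
    {χ : AddChar G 𝕜} {p : ℕ} (hp : p < orderOf χ) (a : ι → 𝕜) :
    𝔼 t : ι → G, ‖∑ j, a j * χ (t j)‖ ^ (2 * p) ≤ p ! * (∑ j, ‖a j‖ ^ 2) ^ p := by
  have hinj : Set.InjOn (monomialAddChar χ) (piAntidiag (univ : Finset ι) p : Set (ι → ℕ)) := by
    refine (monomialAddChar_injOn χ).mono fun k hk => ?_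
    have hsum : ∑ j, k j = p := (mem_piAntidiag.mp hk).1
    exact fun j => (hsum ▸ single_le_sum_of_canonicallyOrdered (mem_univ j)).trans_lt hp
  calc 𝔼 t : ι → G, ‖∑ j, a j * χ (t j)‖ ^ (2 * p)
      = 𝔼 t : ι → G, ‖∑ k ∈ piAntidiag univ p,
          (Nat.multinomial univ k * ∏ j, a j ^ k j) * monomialAddChar χ k t‖ ^ 2 := by
        simp only [mul_comm 2 p, pow_mul, ← norm_pow, sum_pow_eq_sum_piAntidiag, mul_pow,
          prod_mul_distrib, monomialAddChar_apply, mul_assoc]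
    _ = ∑ k ∈ piAntidiag univ p,
          (Nat.multinomial univ k : ℝ) * (Nat.multinomial univ k * ∏ j, (‖a j‖ ^ 2) ^ k j) := by
        rw [expect_norm_sq_sum_mul_addChar hinj]
        refine sum_congr rfl fun k _ => ?_
        simp only [norm_mul, RCLike.norm_natCast, norm_prod, norm_pow, mul_pow,
          pow_right_comm _ 2, prod_pow]
        ring
    _ ≤ ∑ k ∈ piAntidiag univ p,
          (p ! : ℝ) * (Nat.multinomial univ k * ∏ j, (‖a j‖ ^ 2) ^ k j) := by
        gcongr with k hk
        exact_mod_cast (mem_piAntidiag.mp hk).1 ▸ multinomial_le_factorial_sum univ k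
    _ = p ! * (∑ j, ‖a j‖ ^ 2) ^ p := by
        rw [← mul_sum, ← sum_pow_eq_sum_piAntidiag]

theorem orderOf_stdAddChar (N : ℕ) [NeZero N] :
    orderOf (ZMod.stdAddChar : AddChar (ZMod N) ℂ) = N := by
  refine Nat.dvd_antisymm (orderOf_dvd_of_pow_eq_one (DFunLike.ext _ _ fun x => ?_)) ?_
  · rw [AddChar.pow_apply, ← AddChar.map_nsmul_eq_pow]
    simp
  · rw [← ZMod.natCast_eq_zero_iff]
    refine ZMod.injective_stdAddChar ?_
    have h := DFunLike.congr_fun (pow_orderOf_eq_one (ZMod.stdAddChar : AddChar (ZMod N) ℂ)) 1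
    rw [AddChar.pow_apply, ← AddChar.map_nsmul_eq_pow] at h
    simpa using h

theorem exists_unitary_norm_apply_sq_eq_inv_card (ι : Type*) [Fintype ι] [DecidableEq ι] :
    ∃ F ∈ unitaryGroup ι ℂ, ∀ i j, ‖F i j‖ ^ 2 = (Fintype.card ι : ℝ)⁻¹ := by
  rcases isEmpty_or_nonempty ι with _ | _
  · exact ⟨1, one_mem _, fun i => isEmptyElim i⟩
  have hd : NeZero (Fintype.card ι) := ⟨Fintype.card_ne_zero⟩
  obtain ⟨e⟩ : Nonempty (ι ≃ ZMod (Fintype.card ι)) :=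
    Fintype.card_eq.mp (ZMod.card _).symm
  set d := Fintype.card ι
  set χ : AddChar (ZMod d) ℂ := ZMod.stdAddChar
  have hsqrt : (√d : ℂ)⁻¹ * (√d : ℂ)⁻¹ * d = 1 := by
    have hd0 : (d : ℂ) ≠ 0 := Nat.cast_ne_zero.mpr hd.out
    have h : (√d : ℂ) * √d = d := by exact_mod_cast Real.mul_self_sqrt d.cast_nonneg
    rw [← mul_inv, h, inv_mul_cancel₀ hd0]
  refine ⟨of fun i j => (√d : ℂ)⁻¹ * χ (e j * e i), mem_unitaryGroup_iff.mpr ?_, fun i j => ?_⟩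
  · ext i j
    simp only [mul_apply, star_apply, of_apply]
    calc ∑ l, (√d : ℂ)⁻¹ * χ (e l * e i) * star ((√d : ℂ)⁻¹ * χ (e l * e j))
        = (√d : ℂ)⁻¹ * (√d : ℂ)⁻¹ * ∑ l, χ (e l * (e i - e j)) := by
          rw [mul_sum]
          refine sum_congr rfl fun l _ => ?_
          rw [mul_sub, sub_eq_add_neg, AddChar.map_add_eq_mul, AddChar.map_neg_eq_conj]
          simp only [star_mul', RCLike.star_def, map_inv₀, Complex.conj_ofReal]
          ring
      _ = (√d : ℂ)⁻¹ * (√d : ℂ)⁻¹ * if i = j then (d : ℂ) else 0 := by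
          rw [e.sum_comp fun x => χ (x * (e i - e j)),
            AddChar.sum_mulShift _ (ZMod.isPrimitive_stdAddChar d)]
          simp only [sub_eq_zero, e.injective.eq_iff, ZMod.card, Nat.cast_ite, Nat.cast_zero]
      _ = (1 : Matrix ι ι ℂ) i j := by
          rw [one_apply, mul_ite, mul_zero, hsqrt]
  · simp [AddChar.norm_apply]

theorem diagonal_mem_unitaryGroup [Fintype ι] [DecidableEq ι] {u : ι → 𝕜} (hu : ∀ j, ‖u j‖ = 1) :
    diagonal u ∈ unitaryGroup ι 𝕜 := by
  rw [mem_unitaryGroup_iff, star_eq_conjTranspose, diagonal_conjTranspose, diagonal_mul_diagonal,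
    ← diagonal_one]
  congr 1
  ext j
  simp [RCLike.mul_conj, hu]

theorem expect_norm_mulVec_addChar_mul_pow_le [AddCommGroup G] [Fintype G] [Fintype ι]
    [DecidableEq ι] {χ : AddChar G 𝕜} {p : ℕ} (hp : p < orderOf χ) {F : Matrix κ ι 𝕜} {c : ℝ}
    (hF : ∀ i j, ‖F i j‖ ^ 2 = c) (ψ : ι → 𝕜) (i : κ) :
    𝔼 t : ι → G, ‖(F *ᵥ fun j => χ (t j) * ψ j) i‖ ^ (2 * p) ≤
      p ! * (c * ∑ j, ‖ψ j‖ ^ 2) ^ p := by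
  have h := expect_norm_sum_mul_addChar_pow_le hp fun j => F i j * ψ j
  simpa only [mulVec, dotProduct, norm_mul, mul_pow, hF, ← mul_sum, mul_assoc,
    mul_comm (ψ _)] using h

theorem exists_unitary_sum_norm_pow_le [Fintype ι] [DecidableEq ι] (s : Finset ι)
    (S : Finset (ι → ℂ)) (hS : ∀ ψ ∈ S, ∑ j, ‖ψ j‖ ^ 2 = 1) (p : ℕ) :
    ∃ U ∈ unitaryGroup ι ℂ, ∀ ψ ∈ S,
      ∑ i ∈ s, ‖(U *ᵥ ψ) i‖ ^ (2 * p) ≤ #S * #s * (p ! * (Fintype.card ι : ℝ)⁻¹ ^ p) := by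
  obtain ⟨F, hF, hflat⟩ := exists_unitary_norm_apply_sq_eq_inv_card ι
  let χ : AddChar (ZMod (p + 1)) ℂ := ZMod.stdAddChar
  have hp : p < orderOf χ := by rw [orderOf_stdAddChar]; exact p.lt_succ_self
  let U (t : ι → ZMod (p + 1)) : Matrix ι ι ℂ := F * diagonal fun j => χ (t j)
  have hU (t) : U t ∈ unitaryGroup ι ℂ :=
    mul_mem hF (diagonal_mem_unitaryGroup fun j => χ.norm_apply (t j))
  have hmoment : ∀ ψ ∈ S, ∀ i ∈ s,
      𝔼 t, ‖(U t *ᵥ ψ) i‖ ^ (2 * p) ≤ p ! * (Fintype.card ι : ℝ)⁻¹ ^ p := by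
    intro ψ hψ i _
    have hUψ (t) : U t *ᵥ ψ = F *ᵥ fun j => χ (t j) * ψ j := by
      rw [← mulVec_mulVec]
      congr 1
      ext j
      exact mulVec_diagonal _ _ _
    simpa only [hUψ, hS ψ hψ, mul_one] using expect_norm_mulVec_addChar_mul_pow_le hp hflat ψ i
  have htotal : 𝔼 t, ∑ ψ ∈ S, ∑ i ∈ s, ‖(U t *ᵥ ψ) i‖ ^ (2 * p) ≤
      #S * #s * (p ! * (Fintype.card ι : ℝ)⁻¹ ^ p) := by
    simp only [expect_sum_comm]
    refine (sum_le_sum fun ψ hψ => sum_le_sum (hmoment ψ hψ)).trans_eq ?_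
    simp only [sum_const, nsmul_eq_mul, mul_assoc]
  obtain ⟨t, -, ht⟩ := exists_le_of_expect_le univ_nonempty htotal
  refine ⟨U t, hU t, fun ψ hψ => le_trans ?_ ht⟩
  exact single_le_sum (f := fun ψ => ∑ i ∈ s, ‖(U t *ᵥ ψ) i‖ ^ (2 * p))
    (fun _ _ => by positivity) hψ

theorem exists_unitary_sum_norm_sq_le_of_card_mul_factorial_le [Fintype ι] [DecidableEq ι]
    (s : Finset ι) (S : Finset (ι → ℂ)) (hS : ∀ ψ ∈ S, ∑ j, ‖ψ j‖ ^ 2 = 1) {p : ℕ} (hp : p ≠ 0)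
    {B : ℝ} (hB : 0 ≤ B) (hcard : #S * p ! ≤ B ^ p) :
    ∃ U ∈ unitaryGroup ι ℂ, ∀ ψ ∈ S,
      ∑ i ∈ s, ‖(U *ᵥ ψ) i‖ ^ 2 ≤ #s * B / Fintype.card ι := by
  obtain ⟨U, hU, h⟩ := exists_unitary_sum_norm_pow_le s S hS p
  refine ⟨U, hU, fun ψ hψ => le_of_pow_le_pow_left₀ hp (by positivity) ?_⟩
  rcases s.eq_empty_or_nonempty with rfl | hs
  · simp [hp]
  obtain ⟨q, rfl⟩ := Nat.exists_eq_succ_of_ne_zero hp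
  have hjensen := pow_sum_div_card_le_sum_pow (s := s) (f := fun i => ‖(U *ᵥ ψ) i‖ ^ 2)
    (fun i _ => by positivity) q
  rw [div_le_iff₀ (by have := hs.card_pos; positivity)] at hjensen
  calc (∑ i ∈ s, ‖(U *ᵥ ψ) i‖ ^ 2) ^ (q + 1)
      ≤ (∑ i ∈ s, ‖(U *ᵥ ψ) i‖ ^ (2 * (q + 1))) * #s ^ q := by
        simpa only [← pow_mul] using hjensen
    _ ≤ #S * #s * ((q + 1)! * (Fintype.card ι : ℝ)⁻¹ ^ (q + 1)) * #s ^ q := by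
        gcongr
        exact h ψ hψ
    _ = (#s : ℝ) ^ (q + 1) * (#S * (q + 1)!) * (Fintype.card ι : ℝ)⁻¹ ^ (q + 1) := by ring
    _ ≤ (#s : ℝ) ^ (q + 1) * B ^ (q + 1) * (Fintype.card ι : ℝ)⁻¹ ^ (q + 1) := by gcongr
    _ = (#s * B / Fintype.card ι) ^ (q + 1) := by rw [← mul_pow, ← mul_pow, div_eq_mul_inv]

theorem exists_orthonormalBasis_mem_orthogonal {E : Type*} [NormedAddCommGroup E]
    [InnerProductSpace 𝕜 E] [FiniteDimensional 𝕜 E] [Fintype ι]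
    (hE : Module.finrank 𝕜 E = Fintype.card ι) (W : Submodule 𝕜 E) (s : Finset ι)
    (hs : #s + Module.finrank 𝕜 W ≤ Fintype.card ι) :
    ∃ b : OrthonormalBasis ι 𝕜 E, ∀ i ∈ s, b i ∈ Wᗮ := by
  classical
  have hle : Fintype.card s ≤ Fintype.card (Fin (Module.finrank 𝕜 Wᗮ)) := by
    have := W.finrank_add_finrank_orthogonal
    rw [Fintype.card_coe, Fintype.card_fin]
    omega
  obtain ⟨f⟩ := Function.Embedding.nonempty_of_card_le hle
  let w : s → E := fun i => stdOrthonormalBasis 𝕜 Wᗮ (f i)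
  have hw : Orthonormal 𝕜 w :=
    ((stdOrthonormalBasis 𝕜 Wᗮ).orthonormal.comp f f.injective).comp_linearIsometry Wᗮ.subtypeₗᵢ
  let v : ι → E := fun i => if hi : i ∈ s then w ⟨i, hi⟩ else 0
  have hv (i : ι) (hi : i ∈ s) : v i = w ⟨i, hi⟩ := dif_pos hi
  have hvw : (s : Set ι).domRestrict v = w := funext fun i => hv i i.2
  obtain ⟨b, hb⟩ := (hvw ▸ hw : Orthonormal 𝕜 ((s : Set ι).domRestrict v))
    |>.exists_orthonormalBasis_extension_of_card_eq hE
  refine ⟨b, fun i hi => ?_⟩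
  rw [hb i hi, hv i hi]
  exact (stdOrthonormalBasis 𝕜 Wᗮ (f ⟨i, hi⟩)).2

theorem exists_unitary_mulVec_eq_zero [Fintype ι] [DecidableEq ι] (s : Finset ι)
    (S : Finset (ι → 𝕜)) (hcard : #s + #S ≤ Fintype.card ι) :
    ∃ U ∈ unitaryGroup ι 𝕜, ∀ ψ ∈ S, ∀ i ∈ s, (U *ᵥ ψ) i = 0 := by
  classical
  let W : Submodule 𝕜 (EuclideanSpace 𝕜 ι) := Submodule.span 𝕜 (S.image (toLp 2))
  have hW : Module.finrank 𝕜 W ≤ #S := (finrank_span_finset_le_card _).trans card_image_le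
  have hsW : #s + Module.finrank 𝕜 W ≤ Fintype.card ι := by omega
  obtain ⟨b, hb⟩ :=
    exists_orthonormalBasis_mem_orthogonal (finrank_euclideanSpace (𝕜 := 𝕜) (ι := ι)) W s hsW
  let e := EuclideanSpace.basisFun ι 𝕜
  refine ⟨b.toBasis.toMatrix e, b.toMatrix_orthonormalBasis_mem_unitary e, fun ψ hψ i hi => ?_⟩
  have hψW : toLp 2 ψ ∈ W := Submodule.subset_span (mem_coe.mpr (mem_image_of_mem _ hψ))
  calc (b.toBasis.toMatrix e *ᵥ ψ) i
      = (b.toBasis.toMatrix e.toBasis *ᵥ e.toBasis.repr (toLp 2 ψ)) i := by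
        rw [e.coe_toBasis]
        rfl
    _ = b.repr (toLp 2 ψ) i := by
        rw [e.toBasis.toMatrix_mulVec_repr b.toBasis, b.coe_toBasis_repr_apply]
    _ = inner 𝕜 (b i) (toLp 2 ψ) := b.repr_apply_apply _ _
    _ = 0 := Submodule.inner_left_of_mem_orthogonal hψW (hb i hi)

theorem two_pow_succ_mul_factorial_le_pow_self {p : ℕ} (hp : 9 ≤ p) :
    2 ^ (p + 1) * p ! ≤ p ^ p := by
  induction p, hp using Nat.le_induction with
  | base => decide
  | succ p hp ih =>
    have hbernoulli : p ^ p + p * p ^ (p - 1) * 1 ≤ (p + 1) ^ p :=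
      pow_add_mul_le_add_pow p.zero_le (Nat.zero_le _) p
    have hgrowth : 2 * p ^ p ≤ (p + 1) ^ p := by
      rwa [mul_one, mul_pow_sub_one (by omega), ← two_mul] at hbernoulli
    calc 2 ^ (p + 1 + 1) * (p + 1)! = (p + 1) * (2 * (2 ^ (p + 1) * p !)) := by
          rw [Nat.factorial_succ]; ring
      _ ≤ (p + 1) * (2 * p ^ p) := by gcongr
      _ ≤ (p + 1) * (p + 1) ^ p := by gcongr
      _ = (p + 1) ^ (p + 1) := (pow_succ' _ _).symm

theorem two_rpow_mul_factorial_floor_le {A : ℝ} (hA : 9 ≤ A) : 2 ^ A * ⌊A⌋₊ ! ≤ A ^ ⌊A⌋₊ := by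
  have hp : 9 ≤ ⌊A⌋₊ := Nat.le_floor (by exact_mod_cast hA)
  calc 2 ^ A * (⌊A⌋₊ ! : ℝ) ≤ 2 ^ (⌊A⌋₊ + 1 : ℝ) * ⌊A⌋₊ ! := by
        gcongr
        · exact one_le_two
        · exact (Nat.lt_floor_add_one A).le
    _ ≤ (⌊A⌋₊ : ℝ) ^ ⌊A⌋₊ := by exact_mod_cast two_pow_succ_mul_factorial_le_pow_self hp
    _ ≤ A ^ ⌊A⌋₊ := by gcongr; exact Nat.floor_le (by linarith)

theorem exists_unitary_sum_norm_sq_le_inv_card [Fintype ι] [DecidableEq ι] {s : Finset ι}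
    (hs : 32 ≤ #s) (hdim : #s ^ 2 ≤ Fintype.card ι) (S : Finset (ι → ℂ))
    (hS : ∀ ψ ∈ S, ∑ j, ‖ψ j‖ ^ 2 = 1) {A : ℝ} (hcard : #S ≤ (2 : ℝ) ^ A)
    (hA : A * #s ^ 2 ≤ Fintype.card ι) :
    ∃ U ∈ unitaryGroup ι ℂ, ∀ ψ ∈ S, ∑ i ∈ s, ‖(U *ᵥ ψ) i‖ ^ 2 ≤ (#s : ℝ)⁻¹ := by
  rcases lt_or_ge A 9 with hA9 | hA9
  · have hS512 : #S ≤ 512 := by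
      have h : (#S : ℝ) ≤ (512 : ℕ) := calc
        (#S : ℝ) ≤ 2 ^ A := hcard
        _ ≤ 2 ^ (9 : ℝ) := Real.rpow_le_rpow_of_exponent_le one_le_two hA9.le
        _ = (512 : ℕ) := by norm_num
      exact_mod_cast h
    have hroom : #s + #S ≤ Fintype.card ι := by nlinarith
    obtain ⟨U, hU, h⟩ := exists_unitary_mulVec_eq_zero s S hroom
    refine ⟨U, hU, fun ψ hψ => ?_⟩
    rw [sum_eq_zero fun i hi => by rw [h ψ hψ i hi, norm_zero, zero_pow two_ne_zero]]
    positivity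
  · have hp : ⌊A⌋₊ ≠ 0 := (Nat.floor_pos.mpr (by linarith)).ne'
    have hunion : #S * (⌊A⌋₊ ! : ℝ) ≤ A ^ ⌊A⌋₊ :=
      (by gcongr : #S * (⌊A⌋₊ ! : ℝ) ≤ 2 ^ A * ⌊A⌋₊ !).trans (two_rpow_mul_factorial_floor_le hA9)
    obtain ⟨U, hU, h⟩ := exists_unitary_sum_norm_sq_le_of_card_mul_factorial_le s S hS hp
      (by linarith) hunion
    refine ⟨U, hU, fun ψ hψ => (h ψ hψ).trans ?_⟩
    have hs0 : (0 : ℝ) < #s := by exact_mod_cast (by omega : 0 < #s)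
    have hd0 : (0 : ℝ) < Fintype.card ι := lt_of_lt_of_le (by positivity) hA
    rw [div_le_iff₀ hd0, ← div_eq_inv_mul, le_div_iff₀ hs0]
    linarith

theorem tamper_detection_replacement_general {α : ℝ} (hα0 : 0 ≤ α) {k n : ℕ} (hk : 5 ≤ k)
    (hkn : 2 * (k : ℝ) ≤ (1 - α) * n) (S : Finset (CodeIdx k (n - k) → ℂ))
    (hS : ∀ ψ ∈ S, ∑ j, ‖ψ j‖ ^ 2 = 1) (hcard : (#S : ℝ) ≤ 2 ^ (((2 : ℝ) ^ n) ^ α)) :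
    ∃ U ∈ unitaryGroup (CodeIdx k (n - k)) ℂ, ∀ ψ ∈ S,
      ∑ m' : Fin (2 ^ k), ‖(U *ᵥ ψ) (m', anc0 (n - k))‖ ^ 2 ≤ ((2 : ℝ) ^ k)⁻¹ := by
  have h2k : 2 * k ≤ n := by
    have : 2 * (k : ℝ) ≤ n := by nlinarith [mul_nonneg hα0 n.cast_nonneg]
    exact_mod_cast this
  have hdim : Fintype.card (CodeIdx k (n - k)) = 2 ^ n := by
    rw [Fintype.card_prod, Fintype.card_fin, Fintype.card_fin, ← pow_add,
      Nat.add_sub_cancel' (by omega)]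
  let s : Finset (CodeIdx k (n - k)) := univ ×ˢ {anc0 (n - k)}
  have hs : #s = 2 ^ k := by simp [s]
  have hs32 : 32 ≤ #s := hs ▸ Nat.pow_le_pow_right two_pos hk
  have hsq : #s ^ 2 ≤ Fintype.card (CodeIdx k (n - k)) := by
    rw [hs, hdim, ← pow_mul']
    exact Nat.pow_le_pow_right two_pos h2k
  have hA : ((2 : ℝ) ^ n) ^ α * #s ^ 2 ≤ Fintype.card (CodeIdx k (n - k)) := by
    rw [hs, hdim]
    push_cast
    rw [← pow_mul', ← Real.rpow_natCast 2 n, ← Real.rpow_natCast 2 (2 * k),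
      ← Real.rpow_mul zero_le_two, ← Real.rpow_add two_pos]
    refine Real.rpow_le_rpow_of_exponent_le one_le_two ?_
    push_cast
    linarith
  simpa only [s, sum_product, sum_singleton, card_product, card_univ, Fintype.card_fin,
    card_singleton, mul_one, Nat.cast_pow, Nat.cast_ofNat] using
    exists_unitary_sum_norm_sq_le_inv_card hs32 hsq S hS hcard hA

end

/-- Tamper detection against replacement channels: for every finite nonempty set `S` of
unit vectors in `ℂ^d`, `d = 2^n`, with `|S| ≤ 2^{d^α}`, there is a unitary `U` such that
for every `ψ ∈ S` the probability `∑_{m'} |⟨e_{m'} ⊗ e_0, U ψ⟩|²` that the decoder of the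
Haar-random scheme fails to output ⊥ after the replacement tampering `ρ ↦ |ψ⟩⟨ψ|` is at
most `2^{-k}`. -/
theorem tamper_detection_replacement (α γ : ℝ)
    (hα0 : 0 ≤ α) (hα : α < 1) (hγ : 2 / (1 - α) ≤ γ) :
    ∃ k₀ : ℕ, ∀ k : ℕ, k₀ ≤ k → ∀ n : ℕ, (n : ℝ) = γ * k →
      ∀ S : Finset (CodeIdx k (n - k) → ℂ),
        S.Nonempty →
        -- S consists of unit vectors
        (∀ ψ ∈ S, ∑ j, ‖ψ j‖ ^ 2 = 1) →
        -- |S| ≤ 2^{d^α}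
        (S.card : ℝ) ≤ (2 : ℝ) ^ (((2 : ℝ) ^ n) ^ α) →
        ∃ U ∈ Matrix.unitaryGroup (CodeIdx k (n - k)) ℂ,
          ∀ ψ ∈ S,
            ∑ m' : Fin (2 ^ k),
              ‖U.mulVec ψ (m', anc0 (n - k))‖ ^ 2 ≤ ((2 : ℝ) ^ k)⁻¹ := by
  have hγα : 2 ≤ γ * (1 - α) := (div_le_iff₀ (by linarith)).mp hγ
  refine ⟨5, fun k hk n hn S _ hS hcard => ?_⟩
  refine tamper_detection_replacement_general hα0 hk ?_ S hS hcard
  calc 2 * (k : ℝ) ≤ γ * (1 - α) * k := by gcongr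
    _ = (1 - α) * n := by rw [hn]; ring

end
end

section
/- (Exact overlap distribution for a Haar-random unitary.) Let d ≥ 1, let v, w ∈ ℂ^d be nonzero vectors, and let t be a real number with 0 ≤ t ≤ ‖v‖²·‖w‖². Then μ{ U ∈ U(d) : |⟨v, U w⟩|² ≥ t } = ( 1 − t/(‖v‖²·‖w‖²) )^{d−1}, where μ is the Haar probability measure on the unitary group U(d). -/
open MeasureTheory Matrix

noncomputable section

/-!
Writing `⟪v, U w⟫ = ⟪U⁻¹ v, w⟫`, the event only concerns the direction of `U⁻¹ v`. Averaging over
`v` with respect to the standard Gaussian measure, which is invariant under isometries, and using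
that the group is transitive on the unit sphere, `U⁻¹ v` may be replaced by a Gaussian vector `x` in
any scale-invariant event. With `s = t / (‖v‖² ‖w‖²)` the event becomes `s ‖x‖² ≤ ‖p‖²`, where `p`
is the orthogonal projection of `x` onto the complex line through `w`, that is, `c ‖q‖² ≤ ‖p‖²`
where `q = x - p` and `c = s / (1 - s)`. Now `p` and `q` are independent and Gaussian, and `‖p‖²` is
exponentially distributed because the line has real dimension two, so the probability is the Laplace
transform `E exp (-c ‖q‖² / 2) = (1 + c)⁻⁽ᵈ⁻¹⁾ = (1 - s)ᵈ⁻¹`.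
-/

open ProbabilityTheory Real Set
open Module (finrank finrank_pos nontrivial_of_finrank_pos finrank_zero_of_subsingleton)
open scoped ENNReal InnerProductSpace Matrix.Module

section StdGaussian

variable {E F : Type*}
  [NormedAddCommGroup E] [InnerProductSpace ℝ E] [FiniteDimensional ℝ E]
  [MeasurableSpace E] [BorelSpace E]
  [NormedAddCommGroup F] [InnerProductSpace ℝ F] [FiniteDimensional ℝ F]
  [MeasurableSpace F] [BorelSpace F]

theorem integrable_rexp_neg_mul_sq_norm {b : ℝ} (hb : 0 < b) :
    Integrable fun x : E ↦ rexp (-b * ‖x‖ ^ 2) :=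
  .of_integral_ne_zero (by rw [GaussianFourier.integral_rexp_neg_mul_sq_norm hb]; positivity)

theorem two_pi_rpow_neg_mul_rpow {a : ℝ} (ha : 0 < a) (p : ℝ) :
    (2 * π) ^ (-p) * (π / (a / 2)) ^ p = a ^ (-p) := by
  rw [rpow_neg (by positivity), rpow_neg ha.le, ← inv_rpow (by positivity), ← inv_rpow ha.le,
    ← mul_rpow (by positivity) (by positivity)]
  congr 1
  field_simp

variable (E) in
theorem stdGaussian_eq_withDensity :
    stdGaussian E = volume.withDensity fun x : E ↦
      .ofReal ((2 * π) ^ (-(finrank ℝ E / 2 : ℝ)) * rexp (-(1 / 2) * ‖x‖ ^ 2)) := by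
  have hint := integrable_rexp_neg_mul_sq_norm (E := E) one_half_pos
  have := isFiniteMeasure_withDensity_ofReal
    (hint.const_mul ((2 * π) ^ (-(finrank ℝ E / 2 : ℝ)))).2
  refine Measure.ext_of_charFun <| funext fun t ↦ ?_
  have hdensity (x : E) :
      (ENNReal.ofReal ((2 * π) ^ (-(finrank ℝ E / 2 : ℝ)) * rexp (-(1 / 2) * ‖x‖ ^ 2))).toReal •
        Complex.exp (⟪x, t⟫_ℝ * Complex.I) =
      ((2 * π) ^ (-(finrank ℝ E / 2 : ℝ)) : ℝ) *
        Complex.exp (-(1 / 2) * ‖x‖ ^ 2 + Complex.I * ⟪t, x⟫_ℝ) := by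
    rw [ENNReal.toReal_ofReal (by positivity), Complex.exp_add, real_inner_comm, Complex.real_smul,
      mul_comm Complex.I]
    push_cast
    ring
  have hconst : ((2 * π) ^ (-(finrank ℝ E / 2 : ℝ)) : ℝ) *
      (π / (1 / 2) : ℂ) ^ (finrank ℝ E / 2 : ℂ) = 1 := by
    have : (π / (1 / 2) : ℂ) ^ (finrank ℝ E / 2 : ℂ) =
        ((π / (1 / 2)) ^ (finrank ℝ E / 2 : ℝ) : ℝ) := by
      rw [Complex.ofReal_cpow (by positivity)]
      push_cast
      rfl
    rw [this, ← Complex.ofReal_mul, two_pi_rpow_neg_mul_rpow one_pos, one_rpow, Complex.ofReal_one]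
  rw [charFun_stdGaussian, charFun_apply,
    integral_withDensity_eq_integral_toReal_smul (by fun_prop) (by simp)]
  simp_rw [hdensity]
  rw [integral_const_mul, GaussianFourier.integral_cexp_neg_mul_sq_norm_add (by norm_num),
    ← mul_assoc, hconst, one_mul, Complex.I_sq]
  ring_nf

theorem stdGaussian_withLp_prod :
    stdGaussian (WithLp 2 (E × F)) =
      ((stdGaussian E).prod (stdGaussian F)).map (WithLp.toLp 2) := by
  have := Measure.isProbabilityMeasure_map (μ := (stdGaussian E).prod (stdGaussian F))
    (WithLp.measurable_toLp 2 (E × F)).aemeasurable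
  refine Measure.ext_of_charFun <| funext fun t ↦ ?_
  rw [charFun_prod, charFun_stdGaussian, charFun_stdGaussian, charFun_stdGaussian,
    ← Complex.exp_add, ← Complex.ofReal_pow, WithLp.prod_norm_sq_eq_of_L2, Complex.ofReal_add,
    Complex.ofReal_pow, Complex.ofReal_pow, neg_add, add_div]
  rfl

theorem lintegral_rexp_neg_mul_sq_norm_stdGaussian {c : ℝ} (hc : -1 < c) :
    ∫⁻ x, .ofReal (rexp (-(c / 2) * ‖x‖ ^ 2)) ∂stdGaussian E =
      .ofReal ((1 + c) ^ (-(finrank ℝ E / 2 : ℝ))) := by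
  have hc' : 0 < 1 + c := by linarith
  have hdensity (x : E) :
      ENNReal.ofReal ((2 * π) ^ (-(finrank ℝ E / 2 : ℝ)) * rexp (-(1 / 2) * ‖x‖ ^ 2)) *
        .ofReal (rexp (-(c / 2) * ‖x‖ ^ 2)) =
      .ofReal ((2 * π) ^ (-(finrank ℝ E / 2 : ℝ)) * rexp (-((1 + c) / 2) * ‖x‖ ^ 2)) := by
    rw [← ENNReal.ofReal_mul (by positivity), mul_assoc, ← Real.exp_add]
    ring_nf
  rw [stdGaussian_eq_withDensity,
    lintegral_withDensity_eq_lintegral_mul _ (by fun_prop) (by fun_prop)]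
  simp_rw [Pi.mul_apply, hdensity]
  rw [← ofReal_integral_eq_lintegral_ofReal
      ((integrable_rexp_neg_mul_sq_norm (half_pos hc')).const_mul _)
      (.of_forall fun x ↦ by positivity),
    integral_const_mul, GaussianFourier.integral_rexp_neg_mul_sq_norm (half_pos hc'),
    two_pi_rpow_neg_mul_rpow hc']

theorem integral_Ioi_mul_rexp_neg_mul_sq {b : ℝ} (hb : 0 < b) (a : ℝ) :
    ∫ y in Ioi a, y * rexp (-b * y ^ 2) = rexp (-b * a ^ 2) / (2 * b) := by
  have hderiv (y : ℝ) : HasDerivAt (fun y ↦ -(rexp (-b * y ^ 2) / (2 * b)))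
      (y * rexp (-b * y ^ 2)) y :=
    ((((hasDerivAt_pow 2 y).const_mul (-b)).exp.div_const (2 * b)).neg).congr_deriv
      (by push_cast; field_simp)
  have hlim : Filter.Tendsto (fun y ↦ -(rexp (-b * y ^ 2) / (2 * b))) .atTop (nhds 0) := by
    have hexp : Filter.Tendsto (fun y ↦ rexp (-b * y ^ 2)) .atTop (nhds 0) :=
      tendsto_exp_atBot.comp <|
        (Filter.tendsto_pow_atTop two_ne_zero).const_mul_atTop_of_neg (neg_lt_zero.2 hb)
    simpa using (hexp.div_const (2 * b)).neg
  rw [integral_Ioi_of_hasDerivAt_of_tendsto' (fun y _ ↦ hderiv y)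
    (integrable_mul_exp_neg_mul_sq hb).integrableOn hlim, zero_sub, neg_neg]

theorem setIntegral_le_sq_norm_rexp_neg_mul_sq_norm (hE : finrank ℝ E = 2) {b r : ℝ} (hb : 0 < b)
    (hr : 0 ≤ r) :
    ∫ x in {x : E | r ≤ ‖x‖ ^ 2}, rexp (-b * ‖x‖ ^ 2) = π / b * rexp (-b * r) := by
  have : Nontrivial E := nontrivial_of_finrank_pos (R := ℝ) (by omega)
  have hball : volume.real (Metric.ball (0 : E) 1) = π := by
    simp [Measure.real, InnerProductSpace.volume_ball_of_dim_even (k := 1) hE, pi_nonneg]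
  have hindicator (x : E) : indicator {x : E | r ≤ ‖x‖ ^ 2} (fun x ↦ rexp (-b * ‖x‖ ^ 2)) x =
      indicator (Ici √r) (fun y ↦ rexp (-b * y ^ 2)) ‖x‖ := by
    simp [indicator, sqrt_le_left]
  have hradial (y : ℝ) : y ^ (2 - 1) • indicator (Ici √r) (fun y ↦ rexp (-b * y ^ 2)) y =
      indicator (Ici √r) (fun y ↦ y * rexp (-b * y ^ 2)) y := by
    by_cases hy : y ∈ Ici √r <;> simp [hy]
  have hIoi : (Ioi 0 ∩ Ici √r : Set ℝ) =ᵐ[volume] Ioi √r := by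
    simpa [Ioi_inter_Ioi, max_eq_right (sqrt_nonneg r)] using
      (ae_eq_refl (Ioi (0 : ℝ))).inter (Ioi_ae_eq_Ici (a := √r)).symm
  rw [← integral_indicator (measurableSet_le (by fun_prop) (by fun_prop))]
  simp_rw [hindicator]
  rw [integral_fun_norm_addHaar volume, hE, hball]
  simp_rw [hradial]
  rw [setIntegral_indicator measurableSet_Ici, setIntegral_congr_set hIoi,
    integral_Ioi_mul_rexp_neg_mul_sq hb, sq_sqrt hr, nsmul_eq_mul, smul_eq_mul, Nat.cast_ofNat]
  field_simp

theorem stdGaussian_le_sq_norm (hE : finrank ℝ E = 2) {r : ℝ} (hr : 0 ≤ r) :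
    stdGaussian E {x | r ≤ ‖x‖ ^ 2} = .ofReal (rexp (-(r / 2))) := by
  rw [stdGaussian_eq_withDensity,
    withDensity_apply _ (measurableSet_le (by fun_prop) (by fun_prop)),
    ← ofReal_integral_eq_lintegral_ofReal
      ((integrable_rexp_neg_mul_sq_norm one_half_pos).const_mul _).integrableOn
      (.of_forall fun x ↦ by positivity),
    integral_const_mul, setIntegral_le_sq_norm_rexp_neg_mul_sq_norm hE one_half_pos hr, hE,
    Nat.cast_ofNat, div_self two_ne_zero, rpow_neg_one]
  congr 1
  field_simp

theorem stdGaussian_singleton_zero :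
    stdGaussian E {0} = .ofReal (0 ^ (finrank ℝ E / 2 : ℝ)) := by
  rcases subsingleton_or_nontrivial E with hE | hE
  · simp [Subsingleton.eq_univ_of_nonempty, finrank_zero_of_subsingleton]
  · rw [stdGaussian_eq_withDensity, withDensity_absolutelyContinuous _ _ (measure_singleton 0),
      zero_rpow (by have := finrank_pos (R := ℝ) (M := E); positivity), ENNReal.ofReal_zero]

theorem prod_stdGaussian_mul_sq_norm_le (hE : finrank ℝ E = 2) {c : ℝ} (hc : 0 ≤ c) :
    ((stdGaussian E).prod (stdGaussian F)) {x | c * ‖x.2‖ ^ 2 ≤ ‖x.1‖ ^ 2} =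
      .ofReal ((1 + c) ^ (-(finrank ℝ F / 2 : ℝ))) := by
  rw [Measure.prod_apply_symm (measurableSet_le (by fun_prop) (by fun_prop)),
    ← lintegral_rexp_neg_mul_sq_norm_stdGaussian (by linarith)]
  refine lintegral_congr fun y ↦ ?_
  rw [neg_mul, div_mul_eq_mul_div]
  exact stdGaussian_le_sq_norm hE (r := c * ‖y‖ ^ 2) (by positivity)

theorem stdGaussian_withLp_prod_mul_sq_norm_le (hE : finrank ℝ E = 2) {s : ℝ} (hs₀ : 0 ≤ s)
    (hs₁ : s ≤ 1) :
    stdGaussian (WithLp 2 (E × F)) {x | s * ‖x‖ ^ 2 ≤ ‖x.fst‖ ^ 2} =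
      .ofReal ((1 - s) ^ (finrank ℝ F / 2 : ℝ)) := by
  rw [stdGaussian_withLp_prod, Measure.map_apply (WithLp.measurable_toLp 2 (E × F))
    (measurableSet_le (by fun_prop) (by fun_prop))]
  simp_rw [preimage_ofPred_eq, WithLp.prod_norm_sq_eq_of_L2, WithLp.toLp_fst, WithLp.toLp_snd]
  rcases hs₁.lt_or_eq with hs | rfl
  · have hs' : 0 < 1 - s := by linarith
    have hset : {x : E × F | s * (‖x.1‖ ^ 2 + ‖x.2‖ ^ 2) ≤ ‖x.1‖ ^ 2} =
        {x | s / (1 - s) * ‖x.2‖ ^ 2 ≤ ‖x.1‖ ^ 2} := by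
      ext x
      rw [mem_ofPred_eq, mem_ofPred_eq, div_mul_eq_mul_div, div_le_iff₀ hs']
      constructor <;> intro <;> linarith
    rw [hset, prod_stdGaussian_mul_sq_norm_le hE (by positivity), rpow_neg (by positivity),
      ← inv_rpow (by positivity)]
    congr 2
    field_simp
    ring
  · have hset : {x : E × F | 1 * (‖x.1‖ ^ 2 + ‖x.2‖ ^ 2) ≤ ‖x.1‖ ^ 2} = univ ×ˢ {0} := by
      ext x
      simp
    rw [hset, Measure.prod_prod, measure_univ, one_mul, stdGaussian_singleton_zero, sub_self]

theorem stdGaussian_mul_sq_norm_le_starProjection {K : Submodule ℝ E} (hK : finrank ℝ K = 2)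
    {s : ℝ} (hs₀ : 0 ≤ s) (hs₁ : s ≤ 1) :
    stdGaussian E {x | s * ‖x‖ ^ 2 ≤ ‖K.starProjection x‖ ^ 2} =
      .ofReal ((1 - s) ^ (finrank ℝ Kᗮ / 2 : ℝ)) := by
  rw [← stdGaussian_withLp_prod_mul_sq_norm_le hK hs₀ hs₁,
    ← stdGaussian_map K.orthogonalDecomposition,
    Measure.map_apply K.orthogonalDecomposition.continuous.measurable
      (measurableSet_le (by fun_prop) (by fun_prop))]
  simp_rw [preimage_ofPred_eq, LinearIsometryEquiv.norm_map,
    Submodule.fst_orthogonalDecomposition_apply]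
  rfl

end StdGaussian

section Averaging

variable {G X : Type*} [Group G] [MeasurableSpace G] [MulAction G X] {μ : Measure G} {S : Set X}

theorem measure_inv_smul_smul_mem [MeasurableMul G] [μ.IsMulLeftInvariant] (h : G) (x : X) :
    μ {g | g⁻¹ • h • x ∈ S} = μ {g | g⁻¹ • x ∈ S} := by
  rw [← measure_preimage_mul μ h⁻¹ {g | g⁻¹ • x ∈ S}]
  simp [mul_smul]

theorem lintegral_measure_inv_smul_mem [MeasurableSpace X] [MeasurableInv G] [MeasurableSMul₂ G X]
    {ν : Measure X} [SFinite ν] [SMulInvariantMeasure G X ν] [IsProbabilityMeasure μ]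
    (hS : MeasurableSet S) :
    ∫⁻ x, μ {g | g⁻¹ • x ∈ S} ∂ν = ν S := by
  have hmeas : MeasurableSet {p : X × G | p.2⁻¹ • p.1 ∈ S} :=
    (measurable_snd.inv.smul measurable_fst) hS
  calc ∫⁻ x, μ {g | g⁻¹ • x ∈ S} ∂ν = (ν.prod μ) {p | p.2⁻¹ • p.1 ∈ S} :=
        (Measure.prod_apply hmeas).symm
    _ = ∫⁻ g, ν ((g⁻¹ • ·) ⁻¹' S) ∂μ := Measure.prod_apply_symm hmeas
    _ = ν S := by simp [measure_preimage_smul]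

end Averaging

section IsometricAction

variable {𝕜 G E : Type*} [RCLike 𝕜] [Group G] [NormedAddCommGroup E] [DistribMulAction G E]
  [IsIsometricSMul G E]

variable (G E) in
theorem smulCommClass_real_of_isIsometricSMul [NormedSpace ℝ E] : SMulCommClass G ℝ E :=
  ⟨fun g ↦ map_smul ((IsometryEquiv.constSMul g).toRealLinearIsometryEquivOfMapZero
    (show g • (0 : E) = 0 from smul_zero g))⟩

theorem norm_smul_of_isIsometricSMul (g : G) (x : E) : ‖g • x‖ = ‖x‖ := by
  simpa using dist_smul g x 0

theorem inner_smul_eq_inner_inv_smul [InnerProductSpace 𝕜 E] [SMulCommClass G 𝕜 E] (g : G)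
    (x y : E) : ⟪x, g • y⟫_𝕜 = ⟪g⁻¹ • x, y⟫_𝕜 := by
  let f : E →ₗᵢ[𝕜] E := ⟨DistribSMul.toLinearMap 𝕜 E g, norm_smul_of_isIsometricSMul g⟩
  rw [← f.inner_map_map (g⁻¹ • x) y]
  change _ = ⟪g • g⁻¹ • x, g • y⟫_𝕜
  rw [smul_inv_smul]

variable [InnerProductSpace ℝ E] [FiniteDimensional ℝ E] [MeasurableSpace E] [BorelSpace E]

instance smulInvariantMeasure_stdGaussian : SMulInvariantMeasure G E (stdGaussian E) :=
  ((smulInvariantMeasure_tfae G (stdGaussian E)).out 0 5).2 fun g ↦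
    stdGaussian_map ((IsometryEquiv.constSMul g).toRealLinearIsometryEquivOfMapZero
      (show g • (0 : E) = 0 from smul_zero g))

theorem measure_inv_smul_mem_eq_stdGaussian [MeasurableSpace G] [MeasurableMul G]
    [MeasurableInv G] [MeasurableSMul₂ G E] {μ : Measure G} [IsProbabilityMeasure μ]
    [μ.IsMulLeftInvariant]
    (htrans : ∀ x y : E, ‖x‖ = 1 → ‖y‖ = 1 → ∃ g : G, g • x = y)
    {S : Set E} (hS : MeasurableSet S)
    (hcone : ∀ r : ℝ, 0 < r → ∀ x, r • x ∈ S ↔ x ∈ S) {v : E} (hv : v ≠ 0) :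
    μ {g | g⁻¹ • v ∈ S} = stdGaussian E S := by
  have := nontrivial_of_ne v 0 hv
  have := smulCommClass_real_of_isIsometricSMul G E
  have hne : ∀ᵐ x ∂stdGaussian E, x ≠ 0 := by
    rw [ae_iff]
    simp [stdGaussian_singleton_zero, zero_rpow, finrank_pos.ne']
  have hconst {x : E} (hx : x ≠ 0) : μ {g | g⁻¹ • x ∈ S} = μ {g | g⁻¹ • v ∈ S} := by
    obtain ⟨h, hh⟩ := htrans (‖v‖⁻¹ • v) (‖x‖⁻¹ • x) (norm_smul_inv_norm hv)
      (norm_smul_inv_norm hx)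
    rw [← measure_inv_smul_smul_mem h v]
    congr! 3 with g
    rw [← hcone ‖x‖⁻¹ (by positivity), ← hcone ‖v‖⁻¹ (by positivity) (g⁻¹ • h • v),
      ← smul_comm, ← smul_comm g⁻¹, ← smul_comm h, hh]
  rw [← lintegral_measure_inv_smul_mem (G := G) (μ := μ) hS,
    lintegral_congr_ae (hne.mono fun x ↦ hconst), lintegral_const, measure_univ, mul_one]

end IsometricAction

section Complex

variable {E : Type*} [NormedAddCommGroup E] [InnerProductSpace ℂ E]

attribute [local instance] InnerProductSpace.complexToReal

theorem starProjection_restrictScalars (K : Submodule ℂ E) [K.HasOrthogonalProjection]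
    [(K.restrictScalars ℝ).HasOrthogonalProjection] (x : E) :
    (K.restrictScalars ℝ).starProjection x = K.starProjection x := by
  refine Submodule.eq_starProjection_of_mem_of_inner_eq_zero (K.starProjection_apply_mem x)
    fun y hy ↦ ?_
  rw [real_inner_eq_re_inner ℂ, K.starProjection_inner_eq_zero x y hy, map_zero]

variable [FiniteDimensional ℂ E] [MeasurableSpace E] [BorelSpace E]

theorem stdGaussian_mul_sq_norm_le_inner {w : E} (hw : w ≠ 0) {s : ℝ} (hs₀ : 0 ≤ s)
    (hs₁ : s ≤ 1) :
    stdGaussian E {x | s * (‖w‖ * ‖x‖) ^ 2 ≤ ‖⟪w, x⟫_ℂ‖ ^ 2} =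
      .ofReal ((1 - s) ^ (finrank ℂ E - 1)) := by
  let K := (ℂ ∙ w).restrictScalars ℝ
  have hK : finrank ℝ K = 2 := by
    rw [show finrank ℝ K = 2 * finrank ℂ (ℂ ∙ w) from finrank_real_of_complex _,
      finrank_span_singleton hw]
  have hKperp : finrank ℝ Kᗮ = 2 * (finrank ℂ E - 1) := by
    have := K.finrank_add_finrank_orthogonal
    rw [finrank_real_of_complex E] at this
    omega
  have hnorm (x : E) : ‖K.starProjection x‖ = ‖⟪w, x⟫_ℂ‖ / ‖w‖ := by
    have := norm_ne_zero_iff.2 hw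
    rw [starProjection_restrictScalars, Submodule.starProjection_singleton, norm_smul, norm_div,
      RCLike.norm_ofReal, abs_of_nonneg (by positivity)]
    field_simp
  have hset : {x : E | s * (‖w‖ * ‖x‖) ^ 2 ≤ ‖⟪w, x⟫_ℂ‖ ^ 2} =
      {x | s * ‖x‖ ^ 2 ≤ ‖K.starProjection x‖ ^ 2} := by
    ext x
    rw [mem_ofPred_eq, mem_ofPred_eq, hnorm, div_pow, le_div_iff₀ (by positivity)]
    ring_nf
  rw [hset, stdGaussian_mul_sq_norm_le_starProjection hK hs₀ hs₁, hKperp, ← rpow_natCast]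
  push_cast
  ring_nf

theorem overlap_distribution_general {G : Type*} [Group G] [MeasurableSpace G] [MeasurableMul G]
    [MeasurableInv G] [DistribMulAction G E] [SMulCommClass G ℂ E] [IsIsometricSMul G E]
    [MeasurableSMul₂ G E]
    (htrans : ∀ x y : E, ‖x‖ = 1 → ‖y‖ = 1 → ∃ g : G, g • x = y)
    (μ : Measure G) [IsProbabilityMeasure μ] [μ.IsMulLeftInvariant]
    {v w : E} (hv : v ≠ 0) (hw : w ≠ 0) {t : ℝ} (ht₀ : 0 ≤ t) (ht₁ : t ≤ ‖v‖ ^ 2 * ‖w‖ ^ 2) :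
    μ {g | t ≤ ‖⟪v, g • w⟫_ℂ‖ ^ 2} =
      .ofReal ((1 - t / (‖v‖ ^ 2 * ‖w‖ ^ 2)) ^ (finrank ℂ E - 1)) := by
  have hvw : 0 < ‖v‖ ^ 2 * ‖w‖ ^ 2 := by positivity
  have hmeas : MeasurableSet
      {x : E | t / (‖v‖ ^ 2 * ‖w‖ ^ 2) * (‖w‖ * ‖x‖) ^ 2 ≤ ‖⟪w, x⟫_ℂ‖ ^ 2} :=
    measurableSet_le (by fun_prop) (by fun_prop)
  rw [← stdGaussian_mul_sq_norm_le_inner hw (div_nonneg ht₀ hvw.le)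
      (div_le_one_of_le₀ ht₁ hvw.le),
    ← measure_inv_smul_mem_eq_stdGaussian (μ := μ) htrans hmeas (fun r hr x ↦ ?_) hv]
  · congr! 3 with g
    rw [mem_ofPred_eq, inner_smul_eq_inner_inv_smul, norm_smul_of_isIsometricSMul,
      norm_inner_symm, mul_pow, mul_comm (‖w‖ ^ 2), div_mul_cancel₀ _ hvw.ne']
  · have : ‖⟪w, r • x⟫_ℂ‖ = r * ‖⟪w, x⟫_ℂ‖ := by
      rw [inner_smul_right_eq_smul, norm_smul, norm_of_nonneg hr.le]
    rw [mem_ofPred_eq, mem_ofPred_eq, this, norm_smul, norm_of_nonneg hr.le, mul_left_comm,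
      mul_pow r, mul_left_comm, mul_pow r, mul_le_mul_iff_right₀ (by positivity)]

end Complex

section UnitaryGroup

theorem exists_linearIsometryEquiv_apply_eq {𝕜 E : Type*} [RCLike 𝕜] [NormedAddCommGroup E]
    [InnerProductSpace 𝕜 E] [FiniteDimensional 𝕜 E] {x y : E} (hx : ‖x‖ = 1) (hy : ‖y‖ = 1) :
    ∃ f : E ≃ₗᵢ[𝕜] E, f x = y := by
  let e := LinearIsometryEquiv.toSpanUnitSingleton (𝕜 := 𝕜) x hx
  let f : (𝕜 ∙ x) →ₗᵢ[𝕜] E :=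
    (LinearIsometry.toSpanSingleton 𝕜 E hy).comp e.symm.toLinearIsometry
  have hx_mem := Submodule.mem_span_singleton_self (R := 𝕜) x
  have he : e.symm ⟨x, hx_mem⟩ = 1 := by
    rw [LinearIsometryEquiv.symm_apply_eq]
    ext
    simp [e]
  refine ⟨f.extend.toLinearIsometryEquiv rfl, ?_⟩
  simpa [f, he] using f.extend_apply ⟨x, hx_mem⟩

instance borelSpace_matrix {m n α : Type*} [Countable m] [Countable n] [TopologicalSpace α]
    [SecondCountableTopology α] [MeasurableSpace α] [BorelSpace α] : BorelSpace (Matrix m n α) :=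
  inferInstanceAs (BorelSpace (m → n → α))

instance secondCountableTopology_matrix {m n α : Type*} [Countable m] [Countable n]
    [TopologicalSpace α] [SecondCountableTopology α] : SecondCountableTopology (Matrix m n α) :=
  inferInstanceAs (SecondCountableTopology (m → n → α))

variable {𝕜 ι : Type*} [RCLike 𝕜] [Fintype ι] [DecidableEq ι]

theorem unitaryGroup_smul_eq_toLp_mulVec (U : unitaryGroup ι 𝕜) (x : EuclideanSpace 𝕜 ι) :
    U • x = WithLp.toLp 2 (U.1 *ᵥ x.ofLp) := rfl

instance isIsometricSMul_unitaryGroup :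
    IsIsometricSMul (unitaryGroup ι 𝕜) (EuclideanSpace 𝕜 ι) where
  isometry_smul U := AddMonoidHomClass.isometry_of_norm (DistribSMul.toAddMonoidHom _ U) fun x ↦
    Unitary.norm_map ⟨toEuclideanCLM (𝕜 := 𝕜) U.1, Unitary.map_mem _ U.2⟩ x

instance continuousSMul_unitaryGroup :
    ContinuousSMul (unitaryGroup ι 𝕜) (EuclideanSpace 𝕜 ι) where
  continuous_smul := by
    simp only [unitaryGroup_smul_eq_toLp_mulVec]
    fun_prop

theorem exists_unitaryGroup_smul_eq {x y : EuclideanSpace 𝕜 ι} (hx : ‖x‖ = 1) (hy : ‖y‖ = 1) :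
    ∃ U : unitaryGroup ι 𝕜, U • x = y := by
  obtain ⟨f, hf⟩ := exists_linearIsometryEquiv_apply_eq (𝕜 := 𝕜) hx hy
  let b := EuclideanSpace.basisFun ι 𝕜
  refine ⟨⟨_, f.toMatrix_mem_unitaryGroup b b⟩, ?_⟩
  rw [← hf]
  exact congrArg (WithLp.toLp 2)
    (LinearMap.toMatrix_mulVec_repr b.toBasis b.toBasis f.toLinearMap x)

theorem inner_toLp_unitaryGroup_smul_toLp (U : unitaryGroup ι 𝕜) (v w : ι → 𝕜) :
    ⟪WithLp.toLp 2 v, U • WithLp.toLp 2 w⟫_𝕜 = ∑ i, starRingEnd 𝕜 (v i) * (U.1 *ᵥ w) i := by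
  simp [PiLp.inner_apply, unitaryGroup_smul_eq_toLp_mulVec, mul_comm]

end UnitaryGroup

/-- Exact overlap distribution for a Haar-random unitary: for nonzero `v, w ∈ ℂ^d` and
`0 ≤ t ≤ ‖v‖²·‖w‖²`, `μ{U : |⟨v, Uw⟩|² ≥ t} = (1 − t/(‖v‖²·‖w‖²))^{d−1}`. -/
theorem overlap_distribution (d : ℕ) (hd : 1 ≤ d)
    (v w : Fin d → ℂ) (hv : v ≠ 0) (hw : w ≠ 0)
    (μ : Measure (Matrix.unitaryGroup (Fin d) ℂ))
    (hμprob : IsProbabilityMeasure μ) (hμinv : μ.IsMulLeftInvariant)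
    (t : ℝ) (ht0 : 0 ≤ t)
    (ht1 : t ≤ (∑ i, ‖v i‖ ^ 2) * (∑ i, ‖w i‖ ^ 2)) :
    μ {U | t ≤ ‖∑ i, (starRingEnd ℂ) (v i) *
        Matrix.mulVec (U : Matrix (Fin d) (Fin d) ℂ) w i‖ ^ 2} =
      ENNReal.ofReal
        ((1 - t / ((∑ i, ‖v i‖ ^ 2) * (∑ i, ‖w i‖ ^ 2))) ^ (d - 1)) := by
  simpa [EuclideanSpace.norm_sq_eq, inner_toLp_unitaryGroup_smul_toLp] using
    overlap_distribution_general (v := WithLp.toLp 2 v) (w := WithLp.toLp 2 w)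
      (fun _ _ ↦ exists_unitaryGroup_smul_eq) μ (by simpa using hv) (by simpa using hw) ht0
      (by simpa [EuclideanSpace.norm_sq_eq] using ht1)

end
end
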